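/- Let m ≥ 1 be an integer. There exist ε > 0 and C > 0 such that the following holds. For l = a, b let z_l : (0,∞) → ℂ be locally absolutely continuous with ‖z_l‖_X ≤ ε, and define v_l : (0,∞) → S² by v_l(r) = ((1+γ_l)h₁ − h₃ z_{l,2}, z_{l,1}, (1+γ_l)h₃ + h₁ z_{l,2})(r), where γ_l = (1 − |z_l|²)^{1/2} − 1. Let e_l : [0,∞) → ℝ³ be the solution of the ODE e_l'(r) = −(v_l'(r)·e_l(r)) v_l(r) with e_l(0) = ĵ = (0,1,0). Then ‖v_a − v_b‖_X + ‖e_a − e_b‖_{L^∞(0,∞)} ≤ C ‖z_a − z_b‖_X. -/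

import Mathlib

open MeasureTheory Set Real Filter
open scoped ENNReal

noncomputable section

abbrev V3 := Fin 3 → ℝ
abbrev V2 := Fin 2 → ℝ

/-- cross product in ℝ³ -/
def cross3 (a b : V3) : V3 :=
  ![a 1 * b 2 - a 2 * b 1, a 2 * b 0 - a 0 * b 2, a 0 * b 1 - a 1 * b 0]

/-- dot product in ℝ³ -/
def dot3 (a b : V3) : ℝ := a 0 * b 0 + a 1 * b 1 + a 2 * b 2

/-- squared euclidean norm in ℝ³ -/
def nsq3 (a : V3) : ℝ := a 0 ^ 2 + a 1 ^ 2 + a 2 ^ 2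

/-- the generator R of rotations about the x₃-axis -/
def Rv (a : V3) : V3 := ![-a 1, a 0, 0]

/-- the rotation e^{αR} about the x₃-axis -/
def rotZ (α : ℝ) (a : V3) : V3 :=
  ![Real.cos α * a 0 - Real.sin α * a 1, Real.sin α * a 0 + Real.cos α * a 1, a 2]

def kHat : V3 := ![0, 0, 1]
def negkHat : V3 := ![0, 0, -1]
def jHat : V3 := ![0, 1, 0]

/-- first component of the harmonic map profile -/
def h1f (m : ℕ) (r : ℝ) : ℝ := 2 / (r ^ (m : ℤ) + r ^ (-(m : ℤ)))

/-- third component of the harmonic map profile -/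
def h3f (m : ℕ) (r : ℝ) : ℝ := (r ^ (m : ℤ) - r ^ (-(m : ℤ))) / (r ^ (m : ℤ) + r ^ (-(m : ℤ)))

/-- the harmonic map profile h -/
def hProf (m : ℕ) (r : ℝ) : V3 := ![h1f m r, 0, h3f m r]

/-- the r-derivative of the harmonic map profile -/
def dhProf (m : ℕ) (r : ℝ) : V3 :=
  ![-((m : ℝ) / r) * h1f m r * h3f m r, 0, ((m : ℝ) / r) * (h1f m r) ^ 2]

/-- profile of the harmonic map e^{(mθ+α)R} h(r/s) -/
def harmP (m : ℕ) (s α : ℝ) (r : ℝ) : V3 := rotZ α (hProf m (r / s))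

/-- its r-derivative -/
def dharmP (m : ℕ) (s α : ℝ) (r : ℝ) : V3 := fun i => (1 / s) * rotZ α (dhProf m (r / s)) i

/-- `v` is locally absolutely continuous on (0,∞), with a.e. derivative `dv`. -/
def LocAC (v dv : ℝ → V3) : Prop :=
  (∀ a b : ℝ, 0 < a → a ≤ b → ∀ i, IntervalIntegrable (fun r => dv r i) volume a b) ∧
  (∀ a b : ℝ, 0 < a → a ≤ b → ∀ i, v b i - v a i = ∫ r in a..b, dv r i)

/-- energy density (w.r.t. dr) of the m-equivariant map with profile (v,dv) -/
def eDen (m : ℕ) (v dv : ℝ → V3) (r : ℝ) : ℝ :=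
  (nsq3 (dv r) + ((m : ℝ) ^ 2 / r ^ 2) * ((v r 0) ^ 2 + (v r 1) ^ 2)) * r

/-- the energy E(u) = (1/2)∫|∇u|² of the m-equivariant map with profile (v,dv) -/
def energy (m : ℕ) (v dv : ℝ → V3) : ℝ := π * ∫ r in Ioi (0:ℝ), eDen m v dv r

/-- membership in the class Σ_m, expressed in terms of the profile (v,dv) -/
def InSigma (m : ℕ) (v dv : ℝ → V3) : Prop :=
  LocAC v dv ∧ (∀ r ∈ Ioi (0:ℝ), nsq3 (v r) = 1) ∧
  IntegrableOn (eDen m v dv) (Ioi (0:ℝ)) ∧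
  Tendsto v (nhdsWithin 0 (Ioi 0)) (nhds negkHat) ∧
  Tendsto v atTop (nhds kHat)

/-- squared Ḣ¹(ℝ²) distance between the m-equivariant maps with profiles (v,dv), (w,dw) -/
def dH1sq (m : ℕ) (v dv w dw : ℝ → V3) : ℝ :=
  2 * π * ∫ r in Ioi (0:ℝ),
    (nsq3 (fun i => dv r i - dw r i)
      + ((m : ℝ) ^ 2 / r ^ 2) * ((v r 0 - w r 0) ^ 2 + (v r 1 - w r 1) ^ 2)) * r

/-- Ḣ¹(ℝ²) distance -/
def dH1 (m : ℕ) (v dv w dw : ℝ → V3) : ℝ := Real.sqrt (dH1sq m v dv w dw)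

/-- the polar angle of a point of ℝ² -/
def angleOf (x : V2) : ℝ := Complex.arg ⟨x 0, x 1⟩

/-- the radius of a point of ℝ² -/
def radOf (x : V2) : ℝ := Real.sqrt ((x 0) ^ 2 + (x 1) ^ 2)

/-- the m-equivariant map u(r,θ) = e^{mθR} v(r) -/
def eqMap (m : ℕ) (v : ℝ → V3) (x : V2) : V3 := rotZ ((m : ℝ) * angleOf x) (v (radOf x))

/-- the spatial gradient ∂_j u of the m-equivariant map with profile (v,dv) -/
def eqGrad (m : ℕ) (v dv : ℝ → V3) (x : V2) (j : Fin 2) : V3 :=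
  rotZ ((m : ℝ) * angleOf x) (fun i =>
    (x j / radOf x) * dv (radOf x) i
      + ((m : ℝ) * (if j = 0 then -(x 1) else x 0) / radOf x ^ 2) * Rv (v (radOf x)) i)

/-- weak (distributional) form of the Schrödinger map equation ∂ₜu = u × Δu on the time
interval I, for the m-equivariant map with time-dependent profile (v,dv):
∫∫ { u·φ_t - Σ_j (u × ∂_j u)·∂_j φ } dx dt = 0 for all C¹ compactly supported φ. -/
def WeakSM (m : ℕ) (I : Set ℝ) (v dv : ℝ → ℝ → V3) : Prop :=
  ∀ φ : ℝ → V2 → V3,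
    (∀ i, ContDiff ℝ 1 (fun q : ℝ × V2 => φ q.1 q.2 i)) →
    (∀ i, HasCompactSupport (fun q : ℝ × V2 => φ q.1 q.2 i)) →
    (∀ t, t ∉ interior I → ∀ x, φ t x = 0) →
    (∫ t in I, ∫ x : V2,
      (dot3 (eqMap m (v t) x) (fun i => deriv (fun τ => φ τ x i) t)
        - ∑ j : Fin 2, dot3 (cross3 (eqMap m (v t) x) (eqGrad m (v t) (dv t) x j))
            (fun i => fderiv ℝ (fun y => φ t y i) x (Pi.single j 1)))) = 0

/-- continuity in t of the map t ↦ u(t) with respect to the Ḣ¹ distance, on I -/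
def H1Cont (m : ℕ) (I : Set ℝ) (v dv : ℝ → ℝ → V3) : Prop :=
  ∀ t₀ ∈ I, ∀ ε > (0:ℝ), ∃ η > (0:ℝ), ∀ t ∈ I, |t - t₀| < η →
    dH1 m (v t) (dv t) (v t₀) (dv t₀) < ε

/-- a weak solution of the Schrödinger map equation in the class C(I; Σ_m), with
initial profile v₀ -/
def SolClass (m : ℕ) (I : Set ℝ) (v dv : ℝ → ℝ → V3) (v₀ : ℝ → V3) : Prop :=
  (∀ r ∈ Ioi (0:ℝ), v 0 r = v₀ r) ∧ WeakSM m I v dv ∧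
  (∀ t ∈ I, InSigma m (v t) (dv t)) ∧ H1Cont m I v dv

/-- the profile of Δu for the m-equivariant map u with profile (v,dv,ddv):
Δu = e^{mθR}( v_rr + v_r/r + (m²/r²) R² v ) -/
def lapP (m : ℕ) (v dv ddv : ℝ → V3) (r : ℝ) : V3 := fun i =>
  ddv r i + dv r i / r + ((m : ℝ) ^ 2 / r ^ 2) * (![-(v r 0), -(v r 1), 0] : V3) i

/-- squared Ḣ² distance (via the Laplacian) -/
def dH2sq (m : ℕ) (v dv ddv w dw ddw : ℝ → V3) : ℝ :=
  2 * π * ∫ r in Ioi (0:ℝ), nsq3 (fun i => lapP m v dv ddv r i - lapP m w dw ddw r i) * r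


/-- `z` is locally absolutely continuous on (0,∞), with a.e. derivative `dz`. -/
def LocACC (z dz : ℝ → ℂ) : Prop :=
  (∀ a b : ℝ, 0 < a → a ≤ b → IntervalIntegrable dz volume a b) ∧
  (∀ a b : ℝ, 0 < a → a ≤ b → z b - z a = ∫ ρ in a..b, dz ρ)

/-- the density (w.r.t. dρ) of the squared X-norm: (|z'|² + |z|²/ρ²) ρ -/
def xDen (z dz : ℝ → ℂ) (ρ : ℝ) : ℝ := (‖dz ρ‖ ^ 2 + ‖z ρ‖ ^ 2 / ρ ^ 2) * ρ

/-- the X-norm ‖z‖_X = (∫ (|z'|² + |z|²/ρ²) ρ dρ)^{1/2} -/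
def normX (z dz : ℝ → ℂ) : ℝ := Real.sqrt (∫ ρ in Ioi (0:ℝ), xDen z dz ρ)

/-- the operator L₀ = ∂_ρ + (m/ρ) h₃(ρ) -/
def L0op (m : ℕ) (z dz : ℝ → ℂ) (ρ : ℝ) : ℂ :=
  dz ρ + ((((m : ℝ) / ρ) * h3f m ρ : ℝ) : ℂ) * z ρ

/-- γ = (1 − |z|²)^{1/2} − 1 -/
def gamC (z : ℝ → ℂ) (ρ : ℝ) : ℝ := Real.sqrt (1 - ‖z ρ‖ ^ 2) - 1

/-- the map v determined by z:
v = ((1+γ)h₁ − h₃ z₂, z₁, (1+γ)h₃ + h₁ z₂) -/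
def vOf (m : ℕ) (z : ℝ → ℂ) (r : ℝ) : V3 :=
  ![(1 + gamC z r) * h1f m r - h3f m r * (z r).im,
    (z r).re,
    (1 + gamC z r) * h3f m r + h1f m r * (z r).im]

/-- the density of the squared X-norm for ℝ³-valued functions -/
def xDenV (v dv : ℝ → V3) (r : ℝ) : ℝ := (nsq3 (dv r) + nsq3 (v r) / r ^ 2) * r

lemma AbsolutelyContinuousOnInterval.congr_eqOn {f g : ℝ → ℝ} {a b : ℝ}
    (hf : AbsolutelyContinuousOnInterval f a b)
    (hfg : EqOn f g (uIcc a b)) : AbsolutelyContinuousOnInterval g a b := by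
  rw [absolutelyContinuousOnInterval_iff] at hf ⊢
  intro ε hε
  obtain ⟨δ, hδ, h⟩ := hf ε hε
  refine ⟨δ, hδ, fun E hE hlen => ?_⟩
  have h1 := h E hE hlen
  have h2 : ∀ i ∈ Finset.range E.1, dist (g (E.2 i).1) (g (E.2 i).2)
      = dist (f (E.2 i).1) (f (E.2 i).2) := by
    intro i hi
    rw [hfg (hE.1 i hi).1, hfg (hE.1 i hi).2]
  rwa [Finset.sum_congr rfl h2]

/-- `f` is absolutely continuous on compact subintervals of `(0, ∞)` with a.e. derivative `g`. -/
structure IsACDeriv (f g : ℝ → ℝ) : Prop where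
  ac : ∀ a b : ℝ, 0 < a → a ≤ b → AbsolutelyContinuousOnInterval f a b
  hasDerivAt : ∀ᵐ r : ℝ, 0 < r → HasDerivAt f (g r) r

namespace IsACDeriv

variable {f f' g g' G : ℝ → ℝ}

lemma of_integral
    (hint : ∀ a b : ℝ, 0 < a → a ≤ b → IntervalIntegrable g volume a b)
    (heq : ∀ a b : ℝ, 0 < a → a ≤ b → f b - f a = ∫ r in a..b, g r) : IsACDeriv f g := by
  constructor
  · intro a b ha hab
    have h1 := (hint a b ha hab).absolutelyContinuousOnInterval_intervalIntegral
      (c := a) (by simp)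
    have h2 : AbsolutelyContinuousOnInterval (fun _ : ℝ => f a) a b :=
      ContDiffOn.absolutelyContinuousOnInterval contDiffOn_const
    refine (h2.fun_add h1).congr_eqOn fun x hx => ?_
    rw [uIcc_of_le hab] at hx
    linarith [heq a x ha hx.1]
  · have h1 : ∀ n : ℕ, ∀ᵐ r : ℝ, r ∈ Ioo (1 / ((n : ℝ) + 1)) ((n : ℝ) + 1) →
        HasDerivAt f (g r) r := by
      intro n
      have hpos : (0 : ℝ) < 1 / ((n : ℝ) + 1) := by positivity
      have hle : 1 / ((n : ℝ) + 1) ≤ (n : ℝ) + 1 := by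
        rw [div_le_iff₀ (by positivity)]
        nlinarith [(n.cast_nonneg : (0 : ℝ) ≤ n)]
      filter_upwards [(hint _ _ hpos hle).ae_hasDerivAt_integral] with r hr hmem
      have hd := hr (by rw [uIcc_of_le hle]; exact ⟨hmem.1.le, hmem.2.le⟩) _ left_mem_uIcc
      have hd2 := hd.const_add (f (1 / ((n : ℝ) + 1)))
      refine hd2.congr_of_eventuallyEq ?_
      filter_upwards [Ioo_mem_nhds hmem.1 hmem.2] with x hx
      linarith [heq _ x hpos hx.1.le]
    filter_upwards [ae_all_iff.2 h1] with r hr hr0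
    obtain ⟨n, hn⟩ := exists_nat_gt (max r (1 / r))
    have hn1 : r < n := (le_max_left _ _).trans_lt hn
    have hn2 : 1 / r < n := (le_max_right _ _).trans_lt hn
    refine hr n ⟨?_, by linarith⟩
    rw [div_lt_iff₀ hr0] at hn2
    rw [div_lt_iff₀ (by linarith)]
    nlinarith

lemma of_hasDerivAt (h : ∀ r : ℝ, 0 < r → HasDerivAt f (g r) r) (hg : ContinuousOn g (Ioi 0)) :
    IsACDeriv f g := by
  have hsub : ∀ a b : ℝ, 0 < a → a ≤ b → uIcc a b ⊆ Ioi 0 := fun a b ha hab x hx => by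
    rw [uIcc_of_le hab] at hx
    exact ha.trans_le hx.1
  have hint : ∀ a b : ℝ, 0 < a → a ≤ b → IntervalIntegrable g volume a b := fun a b ha hab =>
    (hg.mono (hsub a b ha hab)).intervalIntegrable
  refine of_integral hint fun a b ha hab => ?_
  exact (intervalIntegral.integral_eq_sub_of_hasDerivAt
    (fun x hx => h x (hsub a b ha hab hx)) (hint a b ha hab)).symm

lemma congr_deriv (hf : IsACDeriv f f') (h : ∀ᵐ r : ℝ, 0 < r → f' r = g r) : IsACDeriv f g := by
  refine ⟨hf.ac, ?_⟩
  filter_upwards [hf.hasDerivAt, h] with r h1 h2 hr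
  rw [← h2 hr]
  exact h1 hr

lemma congr_fun (hf : IsACDeriv f f') (h : ∀ r, f r = g r) : IsACDeriv g f' := by
  rwa [← funext h]

lemma add (hf : IsACDeriv f f') (hg : IsACDeriv g g') :
    IsACDeriv (fun r => f r + g r) (fun r => f' r + g' r) := by
  refine ⟨fun a b ha hab => (hf.ac a b ha hab).fun_add (hg.ac a b ha hab), ?_⟩
  filter_upwards [hf.hasDerivAt, hg.hasDerivAt] with r h1 h2 hr
  exact (h1 hr).add (h2 hr)

lemma sub (hf : IsACDeriv f f') (hg : IsACDeriv g g') :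
    IsACDeriv (fun r => f r - g r) (fun r => f' r - g' r) := by
  refine ⟨fun a b ha hab => (hf.ac a b ha hab).fun_sub (hg.ac a b ha hab), ?_⟩
  filter_upwards [hf.hasDerivAt, hg.hasDerivAt] with r h1 h2 hr
  exact (h1 hr).sub (h2 hr)

lemma mul (hf : IsACDeriv f f') (hg : IsACDeriv g g') :
    IsACDeriv (fun r => f r * g r) (fun r => f' r * g r + f r * g' r) := by
  refine ⟨fun a b ha hab => (hf.ac a b ha hab).fun_mul (hg.ac a b ha hab), ?_⟩
  filter_upwards [hf.hasDerivAt, hg.hasDerivAt] with r h1 h2 hr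
  exact (h1 hr).mul (h2 hr)

lemma continuousOn (hf : IsACDeriv f f') : ContinuousOn f (Ioi 0) := by
  intro r hr
  have hr' : (0 : ℝ) < r := hr
  have h := (hf.ac (r / 2) (2 * r) (by linarith) (by linarith)).continuousOn
  rw [uIcc_of_le (by linarith)] at h
  exact (h.continuousAt (Icc_mem_nhds (by linarith) (by linarith))).continuousWithinAt

lemma abs_sub_le (hf : IsACDeriv f f') (hG : IntegrableOn G (Ioi 0))
    (hbd : ∀ᵐ r : ℝ, 0 < r → |f' r| ≤ G r) {a b : ℝ} (ha : 0 < a) (hab : a ≤ b) :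
    |f b - f a| ≤ ∫ r in Ioi (0 : ℝ), G r := by
  have hsub : Ioc a b ⊆ Ioi 0 := fun x hx => ha.trans hx.1
  have hGab : IntervalIntegrable G volume a b :=
    (intervalIntegrable_iff_integrableOn_Ioc_of_le hab).2 (hG.mono_set hsub)
  rw [← (hf.ac a b ha hab).integral_deriv_eq_sub]
  have h1 : ‖∫ r in a..b, deriv f r‖ ≤ ∫ r in a..b, G r := by
    refine intervalIntegral.norm_integral_le_of_norm_le hab ?_ hGab
    filter_upwards [hf.hasDerivAt, hbd] with r h2 h3 hr
    rw [(h2 (hsub hr)).deriv]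
    exact h3 (hsub hr)
  refine h1.trans ?_
  rw [intervalIntegral.integral_of_le hab]
  refine setIntegral_mono_set hG ?_ hsub.eventuallyLE
  filter_upwards [ae_restrict_mem measurableSet_Ioi, ae_restrict_of_ae hbd] with r hr h
  exact (abs_nonneg _).trans (h hr)

lemma eq_of_deriv_eq_zero (hf : IsACDeriv f f') (h0 : ∀ᵐ r : ℝ, 0 < r → f' r = 0) {a b : ℝ}
    (ha : 0 < a) (hb : 0 < b) : f a = f b := by
  have key : ∀ a b : ℝ, 0 < a → a ≤ b → f b = f a := by
    intro a b ha hab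
    have := hf.abs_sub_le (G := fun _ => 0) (integrableOn_zero)
      (by filter_upwards [h0] with r h hr; simp [h hr]) ha hab
    simp only [integral_zero] at this
    linarith [abs_nonpos_iff.1 this]
  rcases le_total a b with h | h
  · exact (key a b ha h).symm
  · exact key b a hb h

end IsACDeriv

section Profile

variable {m : ℕ} {r : ℝ}

/-- The angular speed `m h₁ / r` of the harmonic map profile. -/
def profSpeed (m : ℕ) (r : ℝ) : ℝ := (m : ℝ) / r * h1f m r

lemma h1f_eq (hr : 0 < r) : h1f m r = 2 * r ^ m / ((r ^ m) ^ 2 + 1) := by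
  have : 0 < r ^ m := pow_pos hr m
  rw [h1f, zpow_neg, zpow_natCast]
  field_simp

lemma h3f_eq (hr : 0 < r) : h3f m r = ((r ^ m) ^ 2 - 1) / ((r ^ m) ^ 2 + 1) := by
  have : 0 < r ^ m := pow_pos hr m
  rw [h3f, zpow_neg, zpow_natCast]
  field_simp

lemma h1f_sq_add_h3f_sq (hr : 0 < r) : h1f m r ^ 2 + h3f m r ^ 2 = 1 := by
  rw [h1f_eq hr, h3f_eq hr]
  have : 0 < r ^ m := pow_pos hr m
  field_simp
  ring

lemma h1f_nonneg (hr : 0 < r) : 0 ≤ h1f m r := by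
  rw [h1f_eq hr]
  positivity

lemma h1f_le_one (hr : 0 < r) : h1f m r ≤ 1 := by
  nlinarith [h1f_sq_add_h3f_sq (m := m) hr, sq_nonneg (h3f m r)]

lemma profSpeed_nonneg (hr : 0 < r) : 0 ≤ profSpeed m r :=
  mul_nonneg (by positivity) (h1f_nonneg hr)

lemma profSpeed_le (hr : 0 < r) : profSpeed m r ≤ m / r := by
  have : (0 : ℝ) ≤ m / r := by positivity
  exact mul_le_of_le_one_right this (h1f_le_one hr)

lemma hasDerivAt_pow_profile (hr : 0 < r) :
    HasDerivAt (fun x : ℝ => x ^ m) ((m : ℝ) / r * r ^ m) r := by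
  refine (hasDerivAt_pow m r).congr_deriv ?_
  rcases m with _ | k
  · simp
  · field_simp
    simp [pow_succ]

lemma hasDerivAt_h1f (hr : 0 < r) :
    HasDerivAt (h1f m) (-(profSpeed m r * h3f m r)) r := by
  have hp : 0 < r ^ m := pow_pos hr m
  have hd := hasDerivAt_pow_profile (m := m) hr
  have h := (hd.const_mul 2).div ((hd.fun_pow 2).add_const 1) (by positivity)
  have h2 : HasDerivAt (h1f m) _ r := h.congr_of_eventuallyEq (by
    filter_upwards [lt_mem_nhds hr] with x hx
    exact h1f_eq hx)
  convert h2 using 1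
  rw [profSpeed, h1f_eq hr, h3f_eq hr]
  field_simp
  ring

lemma hasDerivAt_h3f (hr : 0 < r) :
    HasDerivAt (h3f m) (profSpeed m r * h1f m r) r := by
  have hp : 0 < r ^ m := pow_pos hr m
  have hd := hasDerivAt_pow_profile (m := m) hr
  have h := ((hd.fun_pow 2).sub_const 1).div ((hd.fun_pow 2).add_const 1) (by positivity)
  have h2 : HasDerivAt (h3f m) _ r := h.congr_of_eventuallyEq (by
    filter_upwards [lt_mem_nhds hr] with x hx
    exact h3f_eq hx)
  convert h2 using 1
  rw [profSpeed, h1f_eq hr]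
  field_simp
  ring

lemma continuousOn_h1f : ContinuousOn (h1f m) (Ioi 0) := fun _ hr =>
  (hasDerivAt_h1f hr).continuousAt.continuousWithinAt

lemma continuousOn_h3f : ContinuousOn (h3f m) (Ioi 0) := fun _ hr =>
  (hasDerivAt_h3f hr).continuousAt.continuousWithinAt

lemma continuousOn_profSpeed : ContinuousOn (profSpeed m) (Ioi 0) :=
  (continuousOn_const.div continuousOn_id fun _ hr => ne_of_gt hr).mul continuousOn_h1f

lemma isACDeriv_h1f : IsACDeriv (h1f m) (fun r => -(profSpeed m r * h3f m r)) :=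
  .of_hasDerivAt (fun _ hr => hasDerivAt_h1f hr) (continuousOn_profSpeed.mul continuousOn_h3f).neg

lemma isACDeriv_h3f : IsACDeriv (h3f m) (fun r => profSpeed m r * h1f m r) :=
  .of_hasDerivAt (fun _ hr => hasDerivAt_h3f hr) (continuousOn_profSpeed.mul continuousOn_h1f)

lemma h1f_le_two_mul (hm : 1 ≤ m) (hr : 0 < r) (hr1 : r ≤ 1) : h1f m r ≤ 2 * r := by
  have hp : 0 < r ^ m := pow_pos hr m
  have h1 : r ^ m ≤ r := pow_le_of_le_one hr.le hr1 (by omega)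
  rw [h1f_eq hr, div_le_iff₀ (by positivity)]
  nlinarith [mul_pos hr (pow_pos hp 2)]

lemma h1f_le_two_div (hm : 1 ≤ m) (hr1 : 1 ≤ r) : h1f m r ≤ 2 / r := by
  have hr : 0 < r := by linarith
  have hp : 0 < r ^ m := pow_pos hr m
  have h1 : r ≤ r ^ m := le_self_pow₀ hr1 (by omega)
  rw [h1f_eq hr, div_le_div_iff₀ (by positivity) hr]
  nlinarith

lemma integrableOn_profSpeed_sq (hm : 1 ≤ m) :
    IntegrableOn (fun r => profSpeed m r ^ 2 * r) (Ioi 0) := by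
  have hcont : ContinuousOn (fun r => profSpeed m r ^ 2 * r) (Ioi 0) :=
    (continuousOn_profSpeed.pow 2).mul continuousOn_id
  have hkey : ∀ r : ℝ, 0 < r → profSpeed m r ^ 2 * r = (m : ℝ) ^ 2 * (h1f m r ^ 2 / r) := by
    intro r hr
    rw [profSpeed]
    field_simp
  rw [← Ioc_union_Ioi_eq_Ioi (zero_le_one' ℝ)]
  refine IntegrableOn.union ?_ ?_
  · have hc : IntegrableOn (fun _ : ℝ => (m : ℝ) ^ 2 * 4) (Ioc 0 1) :=
      integrableOn_const (by simp)
    refine Integrable.mono' hc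
      ((hcont.mono Ioc_subset_Ioi_self).aestronglyMeasurable measurableSet_Ioc) ?_
    filter_upwards [ae_restrict_mem measurableSet_Ioc] with r hr
    have h1 := h1f_nonneg (m := m) hr.1
    have h2 := h1f_le_two_mul hm hr.1 hr.2
    rw [Real.norm_of_nonneg (mul_nonneg (sq_nonneg _) hr.1.le), hkey r hr.1]
    refine mul_le_mul_of_nonneg_left ?_ (sq_nonneg _)
    rw [div_le_iff₀ hr.1]
    nlinarith [hr.1, hr.2]
  · have hc : IntegrableOn (fun r : ℝ => (m : ℝ) ^ 2 * (4 * r ^ (-2 : ℝ))) (Ioi 1) :=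
      ((integrableOn_Ioi_rpow_of_lt (by norm_num) one_pos).const_mul 4).const_mul _
    refine Integrable.mono' hc
      ((hcont.mono (Ioi_subset_Ioi zero_le_one)).aestronglyMeasurable measurableSet_Ioi) ?_
    filter_upwards [ae_restrict_mem measurableSet_Ioi] with r hr
    have hr1 : (1 : ℝ) < r := hr
    have hr0 : (0 : ℝ) < r := by linarith
    have h1 := h1f_nonneg (m := m) hr0
    have h2 := h1f_le_two_div hm hr1.le
    rw [Real.norm_of_nonneg (mul_nonneg (sq_nonneg _) hr0.le), hkey r hr0]
    refine mul_le_mul_of_nonneg_left ?_ (sq_nonneg _)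
    have h3 : r ^ (-2 : ℝ) = 1 / r ^ 2 := by
      rw [Real.rpow_neg hr0.le, one_div]
      norm_cast
    have h4 : h1f m r ^ 2 ≤ (2 / r) ^ 2 := pow_le_pow_left₀ h1 h2 2
    calc h1f m r ^ 2 / r ≤ h1f m r ^ 2 := div_le_self (sq_nonneg _) hr1.le
      _ ≤ (2 / r) ^ 2 := h4
      _ = 4 * r ^ (-2 : ℝ) := by rw [h3]; ring

end Profile

lemma aestronglyMeasurable_Ioi_of_intervalIntegrable {E : Type*} [NormedAddCommGroup E]
    {g : ℝ → E} (hg : ∀ a b : ℝ, 0 < a → a ≤ b → IntervalIntegrable g volume a b) :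
    AEStronglyMeasurable g (volume.restrict (Ioi 0)) := by
  have hU : (Ioi 0 : Set ℝ) = ⋃ n : ℕ, Ioc (1 / ((n : ℝ) + 1)) ((n : ℝ) + 1) := by
    ext r
    simp only [mem_Ioi, mem_iUnion, mem_Ioc]
    constructor
    · intro hr
      obtain ⟨n, hn⟩ := exists_nat_gt (max r (1 / r))
      have hn1 : r < n := (le_max_left _ _).trans_lt hn
      have hn2 : 1 / r < n := (le_max_right _ _).trans_lt hn
      refine ⟨n, ?_, by linarith⟩
      rw [div_lt_iff₀ hr] at hn2
      rw [div_lt_iff₀ (by linarith)]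
      nlinarith
    · rintro ⟨n, h, -⟩
      exact lt_trans (by positivity) h
  rw [hU, aestronglyMeasurable_iUnion_iff]
  intro n
  have hle : 1 / ((n : ℝ) + 1) ≤ (n : ℝ) + 1 := by
    rw [div_le_iff₀ (by positivity)]
    nlinarith [(n.cast_nonneg : (0 : ℝ) ≤ n)]
  exact ((intervalIntegrable_iff_integrableOn_Ioc_of_le hle).1
    (hg _ _ (by positivity) hle)).aestronglyMeasurable

lemma xDen_nonneg {z dz : ℝ → ℂ} {r : ℝ} (hr : 0 < r) : 0 ≤ xDen z dz r := by
  unfold xDen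
  positivity

lemma normX_nonneg {z dz : ℝ → ℂ} : 0 ≤ normX z dz := Real.sqrt_nonneg _

lemma integral_xDen_eq (z dz : ℝ → ℂ) : ∫ r in Ioi (0 : ℝ), xDen z dz r = normX z dz ^ 2 := by
  rw [normX, Real.sq_sqrt]
  exact setIntegral_nonneg measurableSet_Ioi fun r hr => xDen_nonneg hr

lemma exists_norm_lt_of_integrableOn_xDen {z dz : ℝ → ℂ} (iz : IntegrableOn (xDen z dz) (Ioi 0))
    {η δ : ℝ} (hη : 0 < η) (hδ : 0 < δ) : ∃ s, 0 < s ∧ s < δ ∧ ‖z s‖ < η := by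
  by_contra! hcon
  have hsub : Ioo 0 δ ⊆ Ioi (0 : ℝ) := fun x hx => hx.1
  have h1 : IntegrableOn (fun r : ℝ => r⁻¹) (Ioo 0 δ) := by
    refine Integrable.mono' ((iz.mono_set hsub).const_mul (1 / η ^ 2))
      measurable_inv.aestronglyMeasurable ?_
    filter_upwards [ae_restrict_mem measurableSet_Ioo] with r hr
    have hr0 : 0 < r := hr.1
    have h2 : η ^ 2 ≤ ‖z r‖ ^ 2 := pow_le_pow_left₀ hη.le (hcon r hr0 hr.2) 2
    rw [Real.norm_of_nonneg (by positivity)]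
    calc r⁻¹ = 1 / η ^ 2 * (η ^ 2 / r ^ 2 * r) := by field_simp
      _ ≤ 1 / η ^ 2 * ((‖dz r‖ ^ 2 + ‖z r‖ ^ 2 / r ^ 2) * r) := by
        gcongr
        have : η ^ 2 / r ^ 2 ≤ ‖z r‖ ^ 2 / r ^ 2 := by gcongr
        nlinarith [sq_nonneg ‖dz r‖]
  have h2 : IntervalIntegrable (fun r : ℝ => r⁻¹) volume 0 δ :=
    (intervalIntegrable_iff_integrableOn_Ioo_of_le hδ.le).2 h1
  rw [intervalIntegrable_inv_iff] at h2
  rcases h2 with h2 | h2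
  · exact hδ.ne h2
  · exact h2 left_mem_uIcc

namespace LocACC

variable {z dz w dw : ℝ → ℂ}

lemma isACDeriv_re (h : LocACC z dz) : IsACDeriv (fun r => (z r).re) (fun r => (dz r).re) := by
  refine .of_integral (fun a b ha hab => ?_) fun a b ha hab => ?_
  · rw [intervalIntegrable_iff]
    exact ((intervalIntegrable_iff.1 (h.1 a b ha hab))).re
  · have := Complex.reCLM.intervalIntegral_comp_comm (h.1 a b ha hab)
    simp only [Complex.reCLM_apply] at this
    rw [this, ← h.2 a b ha hab, Complex.sub_re]

lemma isACDeriv_im (h : LocACC z dz) : IsACDeriv (fun r => (z r).im) (fun r => (dz r).im) := by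
  refine .of_integral (fun a b ha hab => ?_) fun a b ha hab => ?_
  · rw [intervalIntegrable_iff]
    exact ((intervalIntegrable_iff.1 (h.1 a b ha hab))).im
  · have := Complex.imCLM.intervalIntegral_comp_comm (h.1 a b ha hab)
    simp only [Complex.imCLM_apply] at this
    rw [this, ← h.2 a b ha hab, Complex.sub_im]

lemma sub (hz : LocACC z dz) (hw : LocACC w dw) :
    LocACC (fun r => z r - w r) (fun r => dz r - dw r) := by
  refine ⟨fun a b ha hab => (hz.1 a b ha hab).sub (hw.1 a b ha hab), fun a b ha hab => ?_⟩
  rw [intervalIntegral.integral_sub (hz.1 a b ha hab) (hw.1 a b ha hab), ← hz.2 a b ha hab,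
    ← hw.2 a b ha hab]
  ring

lemma continuousOn (h : LocACC z dz) : ContinuousOn z (Ioi 0) := by
  have h1 := Complex.continuous_ofReal.comp_continuousOn h.isACDeriv_re.continuousOn
  have h2 := Complex.continuous_ofReal.comp_continuousOn h.isACDeriv_im.continuousOn
  refine (h1.add (h2.mul_const Complex.I)).congr fun r _ => ?_
  simp [Complex.re_add_im]

lemma aestronglyMeasurable_deriv (h : LocACC z dz) :
    AEStronglyMeasurable dz (volume.restrict (Ioi 0)) :=
  aestronglyMeasurable_Ioi_of_intervalIntegrable h.1

lemma aestronglyMeasurable_xDen (h : LocACC z dz) :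
    AEStronglyMeasurable (xDen z dz) (volume.restrict (Ioi 0)) := by
  have h1 := h.aestronglyMeasurable_deriv.aemeasurable
  have h2 := (h.continuousOn.aestronglyMeasurable (μ := volume) measurableSet_Ioi).aemeasurable
  have h3 : AEMeasurable (fun r : ℝ => r) (volume.restrict (Ioi 0)) := aemeasurable_id
  exact (((h1.norm.pow_const 2).add ((h2.norm.pow_const 2).div (h3.pow_const 2))).mul
    h3).aestronglyMeasurable

lemma integrableOn_xDen_sub (hz : LocACC z dz) (hw : LocACC w dw)
    (iz : IntegrableOn (xDen z dz) (Ioi 0)) (iw : IntegrableOn (xDen w dw) (Ioi 0)) :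
    IntegrableOn (xDen (fun r => z r - w r) (fun r => dz r - dw r)) (Ioi 0) := by
  refine Integrable.mono' ((iz.add iw).const_mul 2) (hz.sub hw).aestronglyMeasurable_xDen ?_
  filter_upwards [ae_restrict_mem measurableSet_Ioi] with r hr
  have hr : (0 : ℝ) < r := hr
  rw [Real.norm_of_nonneg (xDen_nonneg hr)]
  have key : ∀ a b : ℂ, ‖a - b‖ ^ 2 ≤ 2 * (‖a‖ ^ 2 + ‖b‖ ^ 2) := fun a b => by
    nlinarith [norm_sub_le a b, norm_nonneg (a - b), sq_nonneg (‖a‖ - ‖b‖)]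
  simp only [xDen, Pi.add_apply]
  have h1 := key (dz r) (dw r)
  have h2 := div_le_div_of_nonneg_right (key (z r) (w r)) (sq_nonneg r)
  calc (‖dz r - dw r‖ ^ 2 + ‖z r - w r‖ ^ 2 / r ^ 2) * r
      ≤ (2 * (‖dz r‖ ^ 2 + ‖dw r‖ ^ 2) + 2 * (‖z r‖ ^ 2 + ‖w r‖ ^ 2) / r ^ 2) * r := by gcongr
    _ = _ := by ring

lemma norm_le_normX (h : LocACC z dz) (iz : IntegrableOn (xDen z dz) (Ioi 0)) {r : ℝ}
    (hr : 0 < r) : ‖z r‖ ≤ normX z dz := by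
  have hd := (h.isACDeriv_re.mul h.isACDeriv_re).add (h.isACDeriv_im.mul h.isACDeriv_im)
  have hns : ∀ w : ℂ, w.re * w.re + w.im * w.im = ‖w‖ ^ 2 := fun w => by
    rw [Complex.sq_norm, Complex.normSq_apply]
  have hbd : ∀ᵐ ρ : ℝ, 0 < ρ → |(dz ρ).re * (z ρ).re + (z ρ).re * (dz ρ).re
      + ((dz ρ).im * (z ρ).im + (z ρ).im * (dz ρ).im)| ≤ xDen z dz ρ := by
    refine Eventually.of_forall fun ρ hρ => ?_
    have h1 : xDen z dz ρ = ((dz ρ).re ^ 2 + (dz ρ).im ^ 2) * ρ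
        + ((z ρ).re ^ 2 + (z ρ).im ^ 2) / ρ := by
      rw [xDen, ← hns, ← hns]
      field_simp
    have h2 : ∀ a b : ℝ, |b * a + a * b| ≤ b ^ 2 * ρ + a ^ 2 / ρ := fun a b => by
      have e : b ^ 2 * ρ + a ^ 2 / ρ = (b * ρ) ^ 2 / ρ + a ^ 2 / ρ := by field_simp
      rw [e, ← add_div, le_div_iff₀ hρ, ← abs_of_pos hρ, ← abs_mul, abs_of_pos hρ, abs_le]
      constructor <;> nlinarith [sq_nonneg (b * ρ - a), sq_nonneg (b * ρ + a)]
    have h3 := h2 (z ρ).re (dz ρ).re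
    have h4 := h2 (z ρ).im (dz ρ).im
    have h5 := abs_add_le ((dz ρ).re * (z ρ).re + (z ρ).re * (dz ρ).re)
      ((dz ρ).im * (z ρ).im + (z ρ).im * (dz ρ).im)
    rw [h1, add_div, add_mul]
    linarith
  refine (sq_le_sq₀ (norm_nonneg _) normX_nonneg).1 ?_
  refine le_of_forall_pos_le_add fun η hη => ?_
  obtain ⟨s, hs0, hsr, hs⟩ := exists_norm_lt_of_integrableOn_xDen iz (Real.sqrt_pos.2 hη) hr
  have h1 := hd.abs_sub_le iz hbd hs0 hsr.le
  rw [hns, hns, integral_xDen_eq] at h1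
  have h2 : ‖z s‖ ^ 2 ≤ η := by
    have := pow_le_pow_left₀ (norm_nonneg _) hs.le 2
    rwa [Real.sq_sqrt hη.le] at this
  linarith [le_abs_self (‖z r‖ ^ 2 - ‖z s‖ ^ 2)]

end LocACC

/-- Pointwise relations between a map `v = x b₁ + y b₂ + g b₃` into the sphere and a unit tangent
vector `u b₁ + p b₂ + q b₃` along it, in an orthonormal frame with `b₁' = 0`, `b₂' = -κ b₃`,
`b₃' = κ b₂`. Here `X, Y, G` are the derivatives of `x, y, g`, and `S` is the inner product of
`v'` with the tangent vector. -/
structure FrameRel (κ x y X Y g G u p q S : ℝ) : Prop where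
  half_le : 1 / 2 ≤ g
  sphere : g ^ 2 + x ^ 2 + y ^ 2 = 1
  deriv_sphere : g * G = -(x * X + y * Y)
  tangent : x * u + y * p + g * q = 0
  unit : u ^ 2 + p ^ 2 + q ^ 2 = 1
  inner_eq : S = X * u + (Y + g * κ) * p + (G - κ * y) * q

lemma abs_mul_sub_mul_le {a b a' b' A B dA dB : ℝ} (ha : |a| ≤ A) (hb : |b'| ≤ B)
    (hda : |a - a'| ≤ dA) (hdb : |b - b'| ≤ dB) : |a * b - a' * b'| ≤ A * dB + dA * B := by
  have e : a * b - a' * b' = a * (b - b') + (a - a') * b' := by ring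
  rw [e]
  refine (abs_add_le _ _).trans ?_
  rw [abs_mul, abs_mul]
  have := abs_nonneg a
  have := abs_nonneg (b - b')
  have := abs_nonneg (a - a')
  have := abs_nonneg b'
  gcongr
  · linarith
  · linarith

lemma abs_mul_le_mul {a b A B : ℝ} (ha : |a| ≤ A) (hb : |b| ≤ B) : |a * b| ≤ A * B := by
  rw [abs_mul]
  exact mul_le_mul ha hb (abs_nonneg _) ((abs_nonneg _).trans ha)

lemma abs_le_two_mul_of_half_le {g t B : ℝ} (hg : 1 / 2 ≤ g) (h : |g * t| ≤ B) :
    |t| ≤ 2 * B := by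
  rw [abs_mul, abs_of_pos (by linarith)] at h
  nlinarith [abs_nonneg t]

namespace FrameRel

variable {κ x y X Y g G u p q S x' y' X' Y' g' G' u' p' q' S' Z Z₁ d d₁ W : ℝ}

lemma abs_u_le (h : FrameRel κ x y X Y g G u p q S) : |u| ≤ 1 :=
  abs_le_one_iff_mul_self_le_one.2 (by nlinarith [h.unit, sq_nonneg p, sq_nonneg q])

lemma abs_p_le (h : FrameRel κ x y X Y g G u p q S) : |p| ≤ 1 :=
  abs_le_one_iff_mul_self_le_one.2 (by nlinarith [h.unit, sq_nonneg u, sq_nonneg q])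

lemma abs_q_le (h : FrameRel κ x y X Y g G u p q S) : |q| ≤ 1 :=
  abs_le_one_iff_mul_self_le_one.2 (by nlinarith [h.unit, sq_nonneg u, sq_nonneg p])

lemma abs_g_le (h : FrameRel κ x y X Y g G u p q S) : |g| ≤ 1 :=
  abs_le_one_iff_mul_self_le_one.2 (by nlinarith [h.sphere, sq_nonneg x, sq_nonneg y])

lemma abs_G_le (h : FrameRel κ x y X Y g G u p q S) (hx : |x| ≤ Z) (hy : |y| ≤ Z)
    (hX : |X| ≤ Z₁) (hY : |Y| ≤ Z₁) : |G| ≤ 4 * (Z * Z₁) := by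
  have h1 : |g * G| ≤ 2 * (Z * Z₁) := by
    rw [h.deriv_sphere, abs_neg]
    linarith [abs_add_le (x * X) (y * Y), abs_mul_le_mul hx hX, abs_mul_le_mul hy hY]
  linarith [abs_le_two_mul_of_half_le h.half_le h1]

lemma abs_g_sub_le (h : FrameRel κ x y X Y g G u p q S)
    (h' : FrameRel κ x' y' X' Y' g' G' u' p' q' S')
    (hx : |x| ≤ Z) (hy : |y| ≤ Z) (hx' : |x'| ≤ Z) (hy' : |y'| ≤ Z)
    (hdx : |x - x'| ≤ d) (hdy : |y - y'| ≤ d) : |g - g'| ≤ 4 * (Z * d) := by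
  have h1 : (g + g') * (g - g') = -((x * x - x' * x') + (y * y - y' * y')) := by
    linear_combination h.sphere - h'.sphere
  have h2 : |(g + g') * (g - g')| ≤ 4 * (Z * d) := by
    rw [h1, abs_neg]
    linarith [abs_add_le (x * x - x' * x') (y * y - y' * y'),
      abs_mul_sub_mul_le hx hx' hdx hdx, abs_mul_sub_mul_le hy hy' hdy hdy]
  have hg := h.half_le
  have hg' := h'.half_le
  rw [abs_mul, abs_of_pos (by linarith)] at h2
  nlinarith [abs_nonneg (g - g')]

lemma abs_G_sub_le (h : FrameRel κ x y X Y g G u p q S)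
    (h' : FrameRel κ x' y' X' Y' g' G' u' p' q' S') (hZ : Z ≤ 1)
    (hx : |x| ≤ Z) (hy : |y| ≤ Z) (hx' : |x'| ≤ Z) (hy' : |y'| ≤ Z)
    (hX' : |X'| ≤ Z₁) (hY' : |Y'| ≤ Z₁)
    (hdx : |x - x'| ≤ d) (hdy : |y - y'| ≤ d) (hdX : |X - X'| ≤ d₁) (hdY : |Y - Y'| ≤ d₁) :
    |G - G'| ≤ 4 * (Z * d₁) + 36 * (Z₁ * d) := by
  have hZ0 : 0 ≤ Z := (abs_nonneg x).trans hx
  have hZ1 : 0 ≤ Z₁ := (abs_nonneg X').trans hX'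
  have hd0 : 0 ≤ d := (abs_nonneg _).trans hdx
  have h1 : g * (G - G') = -((x * X - x' * X') + (y * Y - y' * Y')) - (g - g') * G' := by
    linear_combination h.deriv_sphere - h'.deriv_sphere
  have h3 := abs_mul_le_mul (h.abs_g_sub_le h' hx hy hx' hy' hdx hdy) (h'.abs_G_le hx' hy' hX' hY')
  have h4 : 4 * (Z * d) * (4 * (Z * Z₁)) ≤ 16 * (Z₁ * d) := by
    have : Z * Z ≤ 1 := by nlinarith
    have h5 : 0 ≤ Z₁ * d := by positivity
    nlinarith
  have h2 : |g * (G - G')| ≤ 2 * (Z * d₁) + 18 * (Z₁ * d) := by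
    rw [h1]
    have e1 := abs_sub (-((x * X - x' * X') + (y * Y - y' * Y'))) ((g - g') * G')
    rw [abs_neg] at e1
    linarith [abs_add_le (x * X - x' * X') (y * Y - y' * Y'),
      abs_mul_sub_mul_le hx hX' hdx hdX, abs_mul_sub_mul_le hy hY' hdy hdY]
  linarith [abs_le_two_mul_of_half_le h.half_le h2]

lemma abs_q_sub_le (h : FrameRel κ x y X Y g G u p q S)
    (h' : FrameRel κ x' y' X' Y' g' G' u' p' q' S') (hZ : Z ≤ 1)
    (hx : |x| ≤ Z) (hy : |y| ≤ Z) (hx' : |x'| ≤ Z) (hy' : |y'| ≤ Z)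
    (hdx : |x - x'| ≤ d) (hdy : |y - y'| ≤ d) (hdu : |u - u'| ≤ W) (hdp : |p - p'| ≤ W) :
    |q - q'| ≤ 12 * d + 4 * (Z * W) := by
  have hd0 : 0 ≤ d := (abs_nonneg _).trans hdx
  have h1 : g * (q - q') = -((x * u - x' * u') + (y * p - y' * p')) - (g - g') * q' := by
    linear_combination h.tangent - h'.tangent
  have h3 := abs_mul_le_mul (h.abs_g_sub_le h' hx hy hx' hy' hdx hdy) h'.abs_q_le
  have h4 : Z * d ≤ d := mul_le_of_le_one_left hd0 hZ
  have h2 : |g * (q - q')| ≤ 6 * d + 2 * (Z * W) := by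
    rw [h1]
    have e1 := abs_sub (-((x * u - x' * u') + (y * p - y' * p'))) ((g - g') * q')
    rw [abs_neg] at e1
    linarith [abs_add_le (x * u - x' * u') (y * p - y' * p'),
      abs_mul_sub_mul_le hx h'.abs_u_le hdx hdu, abs_mul_sub_mul_le hy h'.abs_p_le hdy hdp]
  linarith [abs_le_two_mul_of_half_le h.half_le h2]

lemma abs_S_le (h : FrameRel κ x y X Y g G u p q S) (hκ : 0 ≤ κ) (hZ : Z ≤ 1)
    (hx : |x| ≤ Z) (hy : |y| ≤ Z) (hX : |X| ≤ Z₁) (hY : |Y| ≤ Z₁) :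
    |S| ≤ 6 * Z₁ + 2 * κ := by
  have hZ1 : 0 ≤ Z₁ := (abs_nonneg X).trans hX
  have hκa : |κ| ≤ κ := (abs_of_nonneg hκ).le
  have h1 := abs_mul_le_mul hX h.abs_u_le
  have h2 := abs_mul_le_mul ((abs_add_le Y (g * κ)).trans
    (add_le_add hY (abs_mul_le_mul h.abs_g_le hκa))) h.abs_p_le
  have h3 := abs_mul_le_mul ((abs_sub G (κ * y)).trans
    (add_le_add (h.abs_G_le hx hy hX hY) (abs_mul_le_mul hκa hy))) h.abs_q_le
  rw [h.inner_eq]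
  have h4 := abs_add_three (X * u) ((Y + g * κ) * p) ((G - κ * y) * q)
  have h5 : Z * Z₁ ≤ Z₁ := mul_le_of_le_one_left hZ1 hZ
  have h6 : κ * Z ≤ κ := mul_le_of_le_one_right hκ hZ
  linarith

lemma abs_S_sub_le (h : FrameRel κ x y X Y g G u p q S)
    (h' : FrameRel κ x' y' X' Y' g' G' u' p' q' S') (hκ : 0 ≤ κ) (hZ : Z ≤ 1)
    (hx : |x| ≤ Z) (hy : |y| ≤ Z) (hx' : |x'| ≤ Z) (hy' : |y'| ≤ Z)
    (hX : |X| ≤ Z₁) (hY : |Y| ≤ Z₁) (hX' : |X'| ≤ Z₁) (hY' : |Y'| ≤ Z₁)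
    (hdx : |x - x'| ≤ d) (hdy : |y - y'| ≤ d) (hdX : |X - X'| ≤ d₁) (hdY : |Y - Y'| ≤ d₁)
    (hdu : |u - u'| ≤ W) (hdp : |p - p'| ≤ W) :
    |S - S'| ≤ 6 * d₁ + 84 * (Z₁ * d) + 18 * (Z₁ * W) + κ * (17 * d + 5 * W) := by
  have hZ0 : 0 ≤ Z := (abs_nonneg x).trans hx
  have hZ1 : 0 ≤ Z₁ := (abs_nonneg X).trans hX
  have hd0 : 0 ≤ d := (abs_nonneg _).trans hdx
  have hd1 : 0 ≤ d₁ := (abs_nonneg _).trans hdX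
  have hW0 : 0 ≤ W := (abs_nonneg _).trans hdu
  have hκa : |κ| ≤ κ := (abs_of_nonneg hκ).le
  have hκ0 : |κ - κ| ≤ 0 := by simp
  have hq := h.abs_q_sub_le h' hZ hx hy hx' hy' hdx hdy hdu hdp
  have h1 := abs_mul_sub_mul_le hX h'.abs_u_le hdX hdu
  have h2 := abs_mul_sub_mul_le hY h'.abs_p_le hdY hdp
  have h3 := abs_mul_le_mul hκa (abs_mul_sub_mul_le h.abs_g_le h'.abs_p_le
    (h.abs_g_sub_le h' hx hy hx' hy' hdx hdy) hdp)
  have h4 := abs_mul_sub_mul_le (h.abs_G_le hx hy hX hY) h'.abs_q_le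
    (h.abs_G_sub_le h' hZ hx hy hx' hy' hX' hY' hdx hdy hdX hdY) hq
  have h5 := abs_mul_le_mul hκa (abs_mul_sub_mul_le hy h'.abs_q_le hdy hq)
  have e : S - S' = (X * u - X' * u') + (Y * p - Y' * p') + κ * (g * p - g' * p')
      + (G * q - G' * q') - κ * (y * q - y' * q') := by
    rw [h.inner_eq, h'.inner_eq]
    ring
  have hT : |S - S'| ≤ |X * u - X' * u'| + |Y * p - Y' * p'| + |κ * (g * p - g' * p')|
      + |G * q - G' * q'| + |κ * (y * q - y' * q')| := by
    rw [e]
    refine (abs_sub _ _).trans (add_le_add_left ?_ _)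
    refine (abs_add_le _ _).trans (add_le_add_left ?_ _)
    exact abs_add_three _ _ _
  have z1 : Z * d₁ ≤ d₁ := mul_le_of_le_one_left hd1 hZ
  have z2 : Z * (Z₁ * d) ≤ Z₁ * d := mul_le_of_le_one_left (by positivity) hZ
  have z3 : Z * (Z * (Z₁ * W)) ≤ Z₁ * W :=
    (mul_le_of_le_one_left (by positivity) hZ).trans (mul_le_of_le_one_left (by positivity) hZ)
  have z4 : Z * (κ * d) ≤ κ * d := mul_le_of_le_one_left (by positivity) hZ
  have z5 : Z * (Z * (κ * W)) ≤ κ * W :=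
    (mul_le_of_le_one_left (by positivity) hZ).trans (mul_le_of_le_one_left (by positivity) hZ)
  have f4 : 4 * (Z * Z₁) * (12 * d + 4 * (Z * W)) + (4 * (Z * d₁) + 36 * (Z₁ * d)) * 1
      ≤ 48 * (Z₁ * d) + 16 * (Z₁ * W) + 4 * d₁ + 36 * (Z₁ * d) := by
    linarith
  have f3 : κ * (1 * W + 4 * (Z * d) * 1) ≤ κ * W + 4 * (κ * d) := by linarith
  have f5 : κ * (Z * (12 * d + 4 * (Z * W)) + d * 1) ≤ 13 * (κ * d) + 4 * (κ * W) := by linarith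
  linarith

lemma abs_rhs_sub_le (h : FrameRel κ x y X Y g G u p q S)
    (h' : FrameRel κ x' y' X' Y' g' G' u' p' q' S') (hκ : 0 ≤ κ) (hZ : Z ≤ 1)
    (hx : |x| ≤ Z) (hy : |y| ≤ Z) (hx' : |x'| ≤ Z) (hy' : |y'| ≤ Z)
    (hX : |X| ≤ Z₁) (hY : |Y| ≤ Z₁) (hX' : |X'| ≤ Z₁) (hY' : |Y'| ≤ Z₁)
    (hdx : |x - x'| ≤ d) (hdy : |y - y'| ≤ d) (hdX : |X - X'| ≤ d₁) (hdY : |Y - Y'| ≤ d₁)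
    (hdu : |u - u'| ≤ W) (hdp : |p - p'| ≤ W) :
    |S * x - S' * x'| ≤ 90 * (Z * d₁ + Z₁ * d + κ * d + (Z * Z₁ + κ * Z) * W) ∧
    |(S * y + κ * q) - (S' * y' + κ * q')|
      ≤ 90 * (Z * d₁ + Z₁ * d + κ * d + (Z * Z₁ + κ * Z) * W) := by
  have hZ0 : 0 ≤ Z := (abs_nonneg x).trans hx
  have hZ1 : 0 ≤ Z₁ := (abs_nonneg X).trans hX
  have hd0 : 0 ≤ d := (abs_nonneg _).trans hdx
  have hd1 : 0 ≤ d₁ := (abs_nonneg _).trans hdX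
  have hW0 : 0 ≤ W := (abs_nonneg _).trans hdu
  have hκa : |κ| ≤ κ := (abs_of_nonneg hκ).le
  have hS := h.abs_S_le hκ hZ hx hy hX hY
  have hdS := h.abs_S_sub_le h' hκ hZ hx hy hx' hy' hX hY hX' hY' hdx hdy hdX hdY hdu hdp
  have h1 := abs_mul_sub_mul_le hS hx' hdS hdx
  have h2 := abs_mul_sub_mul_le hS hy' hdS hdy
  have h3 := abs_mul_le_mul hκa (h.abs_q_sub_le h' hZ hx hy hx' hy' hdx hdy hdu hdp)
  have z1 : Z₁ * d * Z ≤ Z₁ * d := mul_le_of_le_one_right (by positivity) hZ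
  have z2 : κ * d * Z ≤ κ * d := mul_le_of_le_one_right (by positivity) hZ
  have p1 : 0 ≤ Z * d₁ := by positivity
  have p2 : 0 ≤ Z₁ * d := by positivity
  have p3 : 0 ≤ κ * d := by positivity
  have p4 : 0 ≤ Z * Z₁ * W := by positivity
  have p5 : 0 ≤ κ * Z * W := by positivity
  have e : (S * y + κ * q) - (S' * y' + κ * q') = (S * y - S' * y') + κ * (q - q') := by ring
  constructor
  · linarith
  · rw [e]
    have := abs_add_le (S * y - S' * y') (κ * (q - q'))
    linarith

end FrameRel

section Frame

variable {m : ℕ} {r : ℝ}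

/-- The component of `a` along `h × ĵ = (-h₃, 0, h₁)`. -/
def crossComp (m : ℕ) (r : ℝ) (a : V3) : ℝ := -(h3f m r) * a 0 + h1f m r * a 2

/-- The component of `a` along the profile `h = (h₁, 0, h₃)`. -/
def profComp (m : ℕ) (r : ℝ) (a : V3) : ℝ := h1f m r * a 0 + h3f m r * a 2

lemma dot3_eq_frame (hr : 0 < r) (a b : V3) :
    dot3 a b = a 1 * b 1 + crossComp m r a * crossComp m r b
      + profComp m r a * profComp m r b := by
  simp only [dot3, crossComp, profComp]
  linear_combination -(a 0 * b 0 + a 2 * b 2) * h1f_sq_add_h3f_sq (m := m) hr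

lemma nsq3_eq_frame (hr : 0 < r) (a : V3) :
    nsq3 a = a 1 ^ 2 + crossComp m r a ^ 2 + profComp m r a ^ 2 := by
  simp only [nsq3, crossComp, profComp]
  linear_combination -(a 0 ^ 2 + a 2 ^ 2) * h1f_sq_add_h3f_sq (m := m) hr

lemma crossComp_sub (a b : V3) :
    crossComp m r (fun i => a i - b i) = crossComp m r a - crossComp m r b := by
  simp only [crossComp]
  ring

lemma profComp_sub (a b : V3) :
    profComp m r (fun i => a i - b i) = profComp m r a - profComp m r b := by
  simp only [profComp]
  ring

lemma crossComp_vOf (hr : 0 < r) (z : ℝ → ℂ) : crossComp m r (vOf m z r) = (z r).im := by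
  simp only [crossComp, vOf, Matrix.cons_val]
  linear_combination (z r).im * h1f_sq_add_h3f_sq (m := m) hr

lemma profComp_vOf (hr : 0 < r) (z : ℝ → ℂ) : profComp m r (vOf m z r) = 1 + gamC z r := by
  simp only [profComp, vOf, Matrix.cons_val]
  linear_combination (1 + gamC z r) * h1f_sq_add_h3f_sq (m := m) hr

lemma vOf_one (z : ℝ → ℂ) : vOf m z r 1 = (z r).re := rfl

lemma one_add_gamC_sphere {z : ℝ → ℂ} (hz : ‖z r‖ ≤ 1) :
    (1 + gamC z r) ^ 2 + (z r).re ^ 2 + (z r).im ^ 2 = 1 := by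
  have h1 : ‖z r‖ ^ 2 = (z r).re ^ 2 + (z r).im ^ 2 := by
    rw [Complex.sq_norm, Complex.normSq_apply]
    ring
  rw [gamC, add_sub_cancel, Real.sq_sqrt (by nlinarith [norm_nonneg (z r)]), h1]
  ring

lemma half_le_one_add_gamC {z : ℝ → ℂ} (hz : ‖z r‖ ≤ 1 / 2) : 1 / 2 ≤ 1 + gamC z r := by
  rw [gamC, add_sub_cancel]
  exact Real.le_sqrt_of_sq_le (by nlinarith [norm_nonneg (z r)])

lemma nsq3_vOf (hr : 0 < r) {z : ℝ → ℂ} (hz : ‖z r‖ ≤ 1) : nsq3 (vOf m z r) = 1 := by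
  rw [nsq3_eq_frame (m := m) hr, crossComp_vOf hr, profComp_vOf hr, vOf_one]
  linear_combination one_add_gamC_sphere hz

end Frame

lemma LocAC.isACDeriv {v dv : ℝ → V3} (h : LocAC v dv) (i : Fin 3) :
    IsACDeriv (fun r => v r i) (fun r => dv r i) :=
  .of_integral (fun a b ha hab => h.1 a b ha hab i) fun a b ha hab => h.2 a b ha hab i

/-- `z` has `X`-norm at most `1/2`, `dv` is the derivative of the associated map `v`, and `e` is
the transported frame vector along `v`, starting at `ĵ`. -/
structure FrameAlong (m : ℕ) (z dz : ℝ → ℂ) (dv e : ℝ → V3) : Prop where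
  locAC : LocACC z dz
  integrable : IntegrableOn (xDen z dz) (Ioi 0)
  norm_le : normX z dz ≤ 1 / 2
  locAC_v : LocAC (vOf m z) dv
  integrable_e : ∀ r : ℝ, 0 ≤ r → ∀ i,
    IntegrableOn (fun τ => dot3 (dv τ) (e τ) * vOf m z τ i) (Icc 0 r)
  e_eq : ∀ r : ℝ, 0 ≤ r → ∀ i,
    e r i = jHat i - ∫ τ in (0:ℝ)..r, dot3 (dv τ) (e τ) * vOf m z τ i

namespace FrameAlong

variable {m : ℕ} {z dz : ℝ → ℂ} {dv e : ℝ → V3} {r : ℝ}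

lemma norm_z_le (F : FrameAlong m z dz dv e) (hr : 0 < r) : ‖z r‖ ≤ 1 / 2 :=
  (F.locAC.norm_le_normX F.integrable hr).trans F.norm_le

lemma nsq3_v (F : FrameAlong m z dz dv e) (hr : 0 < r) : nsq3 (vOf m z r) = 1 :=
  nsq3_vOf hr ((F.norm_z_le hr).trans (by norm_num))

lemma isACDeriv_e (F : FrameAlong m z dz dv e) (i : Fin 3) :
    IsACDeriv (fun r => e r i) (fun r => -(dot3 (dv r) (e r) * vOf m z r i)) := by
  have hint : ∀ r : ℝ, 0 ≤ r →
      IntervalIntegrable (fun τ => dot3 (dv τ) (e τ) * vOf m z τ i) volume 0 r := fun r hr =>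
    (intervalIntegrable_iff_integrableOn_Icc_of_le hr).2 (F.integrable_e r hr i)
  have hint' : ∀ a b : ℝ, 0 < a → a ≤ b →
      IntervalIntegrable (fun τ => dot3 (dv τ) (e τ) * vOf m z τ i) volume a b :=
    fun a b ha hab => (hint a ha.le).symm.trans (hint b (ha.le.trans hab))
  refine .of_integral (fun a b ha hab => (hint' a b ha hab).neg) fun a b ha hab => ?_
  rw [F.e_eq a ha.le i, F.e_eq b (ha.le.trans hab) i, intervalIntegral.integral_neg,
    ← intervalIntegral.integral_interval_sub_left (hint b (ha.le.trans hab)) (hint a ha.le)]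
  ring

lemma tendsto_e (F : FrameAlong m z dz dv e) (i : Fin 3) :
    Tendsto (fun r => e r i) (nhdsWithin 0 (Ioi 0)) (nhds (jHat i)) := by
  have h1 : ContinuousOn (fun x => ∫ τ in (0:ℝ)..x, dot3 (dv τ) (e τ) * vOf m z τ i) (Icc 0 1) := by
    have := intervalIntegral.continuousOn_primitive_interval (μ := volume) (a := 0) (b := 1)
      (f := fun τ => dot3 (dv τ) (e τ) * vOf m z τ i)
      (by rw [uIcc_of_le zero_le_one]; exact F.integrable_e 1 zero_le_one i)
    rwa [uIcc_of_le zero_le_one] at this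
  have h2 : Tendsto (fun x => ∫ τ in (0:ℝ)..x, dot3 (dv τ) (e τ) * vOf m z τ i)
      (nhdsWithin 0 (Ioi 0)) (nhds (∫ τ in (0:ℝ)..0, dot3 (dv τ) (e τ) * vOf m z τ i)) :=
    (h1 0 ⟨le_rfl, zero_le_one⟩).mono_left (nhdsWithin_le_of_mem (mem_of_superset
      (Ioo_mem_nhdsGT zero_lt_one) Ioo_subset_Icc_self))
  rw [intervalIntegral.integral_same] at h2
  have h3 := h2.const_sub (jHat i)
  rw [sub_zero] at h3
  refine h3.congr' ?_
  filter_upwards [self_mem_nhdsWithin] with r hr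
  exact (F.e_eq r (le_of_lt hr) i).symm

lemma ae_deriv_v (F : FrameAlong m z dz dv e) : ∀ᵐ r : ℝ, 0 < r →
    dv r 1 = (dz r).re ∧
    crossComp m r (dv r) = (dz r).im + (1 + gamC z r) * profSpeed m r ∧
    (1 + gamC z r) * (profComp m r (dv r) + profSpeed m r * (z r).im)
      = -((z r).re * (dz r).re + (z r).im * (dz r).im) := by
  filter_upwards [(F.locAC_v.isACDeriv 0).hasDerivAt, (F.locAC_v.isACDeriv 1).hasDerivAt,
    (F.locAC_v.isACDeriv 2).hasDerivAt, F.locAC.isACDeriv_re.hasDerivAt,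
    F.locAC.isACDeriv_im.hasDerivAt] with r h0 h1 h2 hre him hr
  replace h0 := h0 hr
  replace h1 := h1 hr
  replace h2 := h2 hr
  have e1 : dv r 1 = (dz r).re := h1.unique (hre hr)
  have e2 : crossComp m r (dv r) = (dz r).im + (1 + gamC z r) * profSpeed m r := by
    have hd := ((hasDerivAt_h3f (m := m) hr).neg.mul h0).add
      ((hasDerivAt_h1f (m := m) hr).mul h2)
    have hd' := hd.unique ((him hr).congr_of_eventuallyEq (by
      filter_upwards [lt_mem_nhds hr] with x hx
      exact crossComp_vOf hx z))
    have hg := profComp_vOf (m := m) hr z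
    simp only [crossComp, profComp, Pi.neg_apply] at hd' hg ⊢
    linear_combination hd' + profSpeed m r * hg
  refine ⟨e1, e2, ?_⟩
  have hd := ((h0.mul h0).add (h1.mul h1)).add (h2.mul h2)
  have hd' := hd.unique ((hasDerivAt_const r (1 : ℝ)).congr_of_eventuallyEq (by
    filter_upwards [lt_mem_nhds hr] with x hx
    have := F.nsq3_v hx
    simp only [nsq3] at this
    simp only [Pi.add_apply, Pi.mul_apply]
    linear_combination this))
  have hdot : dot3 (dv r) (vOf m z r) = 0 := by
    simp only [dot3]
    linear_combination hd' / 2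
  rw [dot3_eq_frame (m := m) hr, crossComp_vOf hr, profComp_vOf hr, e1, e2, vOf_one] at hdot
  linear_combination hdot

lemma dot3_e_v (F : FrameAlong m z dz dv e) (hr : 0 < r) : dot3 (e r) (vOf m z r) = 0 := by
  have hd := (((F.isACDeriv_e 0).mul (F.locAC_v.isACDeriv 0)).add
    ((F.isACDeriv_e 1).mul (F.locAC_v.isACDeriv 1))).add
    ((F.isACDeriv_e 2).mul (F.locAC_v.isACDeriv 2))
  have hconst : ∀ s, 0 < s → dot3 (e r) (vOf m z r) = dot3 (e s) (vOf m z s) := fun s hs =>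
    hd.eq_of_deriv_eq_zero (Eventually.of_forall fun x hx => by
      have := F.nsq3_v hx
      simp only [nsq3] at this
      simp only [dot3]
      linear_combination
        -(dv x 0 * e x 0 + dv x 1 * e x 1 + dv x 2 * e x 2) * this) hr hs
  refine abs_nonpos_iff.1 (le_of_forall_pos_le_add fun η hη => ?_)
  have hev : ∀ i, ∀ᶠ s in nhdsWithin (0 : ℝ) (Ioi 0), |e s i - jHat i| < η / 4 := fun i => by
    have := (F.tendsto_e i).eventually (Metric.ball_mem_nhds _ (by positivity : 0 < η / 4))
    simpa [Real.dist_eq] using this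
  obtain ⟨δ, hδ, hsub⟩ := mem_nhdsGT_iff_exists_Ioo_subset.1
    ((hev 0).and ((hev 1).and (hev 2)))
  obtain ⟨s, hs0, hsδ, hs⟩ := exists_norm_lt_of_integrableOn_xDen F.integrable
    (by positivity : 0 < η / 4) hδ
  obtain ⟨g0, g1, g2⟩ := hsub ⟨hs0, hsδ⟩
  have hv : ∀ i, |vOf m z s i| ≤ 1 := fun i => by
    have := F.nsq3_v (m := m) hs0
    simp only [nsq3] at this
    refine abs_le_one_iff_mul_self_le_one.2 ?_
    fin_cases i <;> simp only [Fin.zero_eta, Fin.mk_one, Fin.reduceFinMk] <;>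
      nlinarith [sq_nonneg (vOf m z s 0), sq_nonneg (vOf m z s 1), sq_nonneg (vOf m z s 2)]
  have hsplit : dot3 (e s) (vOf m z s) = (e s 0 - jHat 0) * vOf m z s 0
      + (e s 1 - jHat 1) * vOf m z s 1 + (e s 2 - jHat 2) * vOf m z s 2 + (z s).re := by
    simp only [dot3, jHat, Matrix.cons_val, ← vOf_one (m := m) (r := s) z]
    ring
  rw [hconst s hs0, hsplit]
  have a1 := abs_add_le ((e s 0 - jHat 0) * vOf m z s 0
      + (e s 1 - jHat 1) * vOf m z s 1 + (e s 2 - jHat 2) * vOf m z s 2) (z s).re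
  have a2 := abs_add_three ((e s 0 - jHat 0) * vOf m z s 0)
    ((e s 1 - jHat 1) * vOf m z s 1) ((e s 2 - jHat 2) * vOf m z s 2)
  have b0 := abs_mul_le_mul g0.le (hv 0)
  have b1 := abs_mul_le_mul g1.le (hv 1)
  have b2 := abs_mul_le_mul g2.le (hv 2)
  have b3 := (Complex.abs_re_le_norm (z s)).trans hs.le
  linarith

lemma nsq3_e (F : FrameAlong m z dz dv e) (hr : 0 < r) : nsq3 (e r) = 1 := by
  have hd := (((F.isACDeriv_e 0).mul (F.isACDeriv_e 0)).add
    ((F.isACDeriv_e 1).mul (F.isACDeriv_e 1))).add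
    ((F.isACDeriv_e 2).mul (F.isACDeriv_e 2))
  have hconst : ∀ s, 0 < s → nsq3 (e s) = nsq3 (e r) := fun s hs => by
    have := hd.eq_of_deriv_eq_zero (Eventually.of_forall fun x hx => by
      have := F.dot3_e_v hx
      simp only [dot3] at this ⊢
      linear_combination
        -2 * (dv x 0 * e x 0 + dv x 1 * e x 1 + dv x 2 * e x 2) * this) hs hr
    simp only [nsq3]
    linear_combination this
  have ht : Tendsto (fun s => nsq3 (e s)) (nhdsWithin 0 (Ioi 0)) (nhds (nsq3 jHat)) :=
    (((F.tendsto_e 0).pow 2).add ((F.tendsto_e 1).pow 2)).add ((F.tendsto_e 2).pow 2)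
  have ht' : Tendsto (fun s => nsq3 (e s)) (nhdsWithin 0 (Ioi 0)) (nhds (nsq3 (e r))) :=
    tendsto_const_nhds.congr' (by
      filter_upwards [self_mem_nhdsWithin] with s hs
      exact (hconst s hs).symm)
  rw [tendsto_nhds_unique ht' ht]
  simp [nsq3, jHat]

lemma isACDeriv_crossComp (F : FrameAlong m z dz dv e) :
    IsACDeriv (fun r => crossComp m r (e r))
      (fun r => -(dot3 (dv r) (e r) * (z r).im + profSpeed m r * profComp m r (e r))) := by
  refine (((isACDeriv_h1f (m := m)).mul (F.isACDeriv_e 2)).sub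
    ((isACDeriv_h3f (m := m)).mul (F.isACDeriv_e 0))).congr_deriv ?_ |>.congr_fun ?_
  · refine Eventually.of_forall fun r hr => ?_
    have := crossComp_vOf (m := m) hr z
    simp only [crossComp, profComp] at this ⊢
    linear_combination -(dot3 (dv r) (e r)) * this
  · intro r
    simp only [crossComp]
    ring

/-- The algebraic part of the frame relations, which holds at every `r > 0`. -/
lemma frameRel (F : FrameAlong m z dz dv e) (hr : 0 < r) :
    FrameRel 0 (z r).re (z r).im (0 : ℂ).re (0 : ℂ).im (1 + gamC z r) 0 (e r 1)
      (crossComp m r (e r)) (profComp m r (e r)) 0 := by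
  refine ⟨half_le_one_add_gamC (F.norm_z_le hr),
    one_add_gamC_sphere ((F.norm_z_le hr).trans (by norm_num)), by simp, ?_, ?_, by simp⟩
  · have := F.dot3_e_v hr
    rw [dot3_eq_frame (m := m) hr, crossComp_vOf hr, profComp_vOf hr, vOf_one] at this
    linear_combination this
  · rw [← nsq3_eq_frame hr, F.nsq3_e hr]

lemma ae_frameRel (F : FrameAlong m z dz dv e) : ∀ᵐ r : ℝ, 0 < r →
    FrameRel (profSpeed m r) (z r).re (z r).im (dz r).re (dz r).im (1 + gamC z r)
      (profComp m r (dv r) + profSpeed m r * (z r).im) (e r 1) (crossComp m r (e r))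
      (profComp m r (e r)) (dot3 (dv r) (e r)) := by
  filter_upwards [F.ae_deriv_v] with r h hr
  obtain ⟨h1, h2, h3⟩ := h hr
  have R := F.frameRel hr
  refine ⟨R.half_le, R.sphere, h3, R.tangent, R.unit, ?_⟩
  rw [dot3_eq_frame (m := m) hr, h1, h2]
  ring

end FrameAlong

/-- A self-improving bound: if every upper bound `K` of `f` improves to `K / 2 + c`, then
`f ≤ 2 * c`. -/
lemma le_two_mul_of_forall_le_half_add {ι : Type*} {f : ι → ℝ} {c : ℝ}
    (hf : BddAbove (range f)) (step : ∀ K, (∀ i, f i ≤ K) → ∀ i, f i ≤ K / 2 + c) (i : ι) :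
    f i ≤ 2 * c := by
  have : Nonempty ι := ⟨i⟩
  have h1 := ciSup_le (step _ (le_ciSup hf))
  linarith [le_ciSup hf i]

lemma IsACDeriv.abs_le_of_tendsto_zero {f f' G : ℝ → ℝ} (hf : IsACDeriv f f')
    (h0 : Tendsto f (nhdsWithin 0 (Ioi 0)) (nhds 0)) (hG : IntegrableOn G (Ioi 0))
    (hbd : ∀ᵐ r : ℝ, 0 < r → |f' r| ≤ G r) {r : ℝ} (hr : 0 < r) :
    |f r| ≤ ∫ ρ in Ioi (0 : ℝ), G ρ := by
  have h1 : Tendsto (fun t => |f r - f t|) (nhdsWithin 0 (Ioi 0)) (nhds |f r - 0|) :=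
    (h0.const_sub (f r)).abs
  rw [sub_zero] at h1
  refine le_of_tendsto h1 ?_
  filter_upwards [Ioo_mem_nhdsGT hr] with t ht
  exact hf.abs_sub_le hG hbd ht.1 ht.2.le

lemma mul_le_weighted {a b r N : ℝ} (hr : 0 < r) (hN : 0 < N) :
    a * b ≤ N * (a ^ 2 / r) / 2 + b ^ 2 * r / (2 * N) := by
  have e : N * (a ^ 2 / r) / 2 + b ^ 2 * r / (2 * N) - a * b
      = (N * a - b * r) ^ 2 / (2 * N * r) := by
    field_simp
    ring
  have : 0 ≤ (N * a - b * r) ^ 2 / (2 * N * r) := by positivity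
  linarith

/-- The quadratic terms in the frame estimates, bounded by densities: here `a, b, d` and
`a₁, b₁, d₁` stand for the moduli of `z_a, z_b, z_a - z_b` and of their derivatives. -/
lemma frame_terms_le {a b a₁ b₁ d d₁ κ r N ε K : ℝ} (hr : 0 < r) (hN : 0 < N) (hε : 0 < ε)
    (hK : 0 ≤ K) :
    (a + b) * d₁ + (a₁ + b₁) * d + κ * d + ((a + b) * (a₁ + b₁) + κ * (a + b)) * K
      ≤ N * ((a₁ ^ 2 + a ^ 2 / r ^ 2) * r + (b₁ ^ 2 + b ^ 2 / r ^ 2) * r)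
        + (d₁ ^ 2 + d ^ 2 / r ^ 2) * r / N + N / 2 * (κ ^ 2 * r)
        + (((a₁ ^ 2 + a ^ 2 / r ^ 2) * r + (b₁ ^ 2 + b ^ 2 / r ^ 2) * r) * (1 + 1 / ε)
          + ε / 2 * (κ ^ 2 * r)) * K := by
  have e : ∀ t t₁ : ℝ, (t₁ ^ 2 + t ^ 2 / r ^ 2) * r = t₁ ^ 2 * r + t ^ 2 / r := fun t t₁ => by
    field_simp
  simp only [e]
  have s : (a + b) ^ 2 / r ≤ 2 * (a ^ 2 / r + b ^ 2 / r) := by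
    rw [← add_div, ← mul_div_assoc]
    gcongr
    nlinarith [sq_nonneg (a - b)]
  have s₁ : (a₁ + b₁) ^ 2 * r ≤ 2 * (a₁ ^ 2 * r + b₁ ^ 2 * r) := by
    rw [← add_mul, ← mul_assoc]
    gcongr
    nlinarith [sq_nonneg (a₁ - b₁)]
  have p1 : 0 ≤ a₁ ^ 2 * r := by positivity
  have p2 : 0 ≤ b₁ ^ 2 * r := by positivity
  have p3 : 0 ≤ a ^ 2 / r := by positivity
  have p4 : 0 ≤ b ^ 2 / r := by positivity
  have t1 : (a + b) * d₁ ≤ N * (a ^ 2 / r + b ^ 2 / r) + d₁ ^ 2 * r / N / 2 := by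
    have h1 := mul_le_weighted (a := a + b) (b := d₁) hr hN
    have h2 := mul_le_mul_of_nonneg_left s hN.le
    have h3 : d₁ ^ 2 * r / (2 * N) = d₁ ^ 2 * r / N / 2 := by field_simp
    linarith
  have t2 : (a₁ + b₁) * d ≤ N * (a₁ ^ 2 * r + b₁ ^ 2 * r) + d ^ 2 / r / N / 2 := by
    have h1 := mul_le_weighted (a := d) (b := a₁ + b₁) hr (inv_pos.2 hN)
    have h2 := mul_le_mul_of_nonneg_left s₁ hN.le
    have h3 : (a₁ + b₁) ^ 2 * r / (2 * N⁻¹) = N * ((a₁ + b₁) ^ 2 * r) / 2 := by field_simp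
    have h4 : N⁻¹ * (d ^ 2 / r) / 2 = d ^ 2 / r / N / 2 := by field_simp
    linarith
  have t3 : κ * d ≤ N / 2 * (κ ^ 2 * r) + d ^ 2 / r / N / 2 := by
    have h1 := mul_le_weighted (a := d) (b := κ) hr (inv_pos.2 hN)
    have h3 : κ ^ 2 * r / (2 * N⁻¹) = N / 2 * (κ ^ 2 * r) := by field_simp
    have h4 : N⁻¹ * (d ^ 2 / r) / 2 = d ^ 2 / r / N / 2 := by field_simp
    linarith
  have t4 : (a + b) * (a₁ + b₁) ≤ (a ^ 2 / r + b ^ 2 / r) + (a₁ ^ 2 * r + b₁ ^ 2 * r) := by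
    have h1 := mul_le_weighted (a := a + b) (b := a₁ + b₁) hr one_pos
    linarith
  have t5 : κ * (a + b) ≤ ε / 2 * (κ ^ 2 * r) + (a ^ 2 / r + b ^ 2 / r) * (1 / ε) := by
    have h1 := mul_le_weighted (a := a + b) (b := κ) hr (inv_pos.2 hε)
    have h2 := mul_le_mul_of_nonneg_left s (inv_pos.2 hε).le
    have h3 : κ ^ 2 * r / (2 * ε⁻¹) = ε / 2 * (κ ^ 2 * r) := by field_simp
    rw [one_div]
    linarith
  have t6 : 0 ≤ (a₁ ^ 2 * r + b₁ ^ 2 * r) * (1 / ε) := by positivity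
  have t7 := mul_le_mul_of_nonneg_right (add_le_add t4 t5) hK
  have t8 := mul_nonneg t6 hK
  have t9 : 0 ≤ d₁ ^ 2 * r / N := by positivity
  have e2 : (d₁ ^ 2 * r + d ^ 2 / r) / N = d₁ ^ 2 * r / N + d ^ 2 / r / N := add_div _ _ _
  rw [e2]
  linarith

namespace FrameRel

variable {κ g G u p q S g' G' u' p' q' S' W : ℝ} {z w z' w' : ℂ}

lemma rhs_sub_le (h : FrameRel κ z.re z.im w.re w.im g G u p q S)
    (h' : FrameRel κ z'.re z'.im w'.re w'.im g' G' u' p' q' S') (hκ : 0 ≤ κ)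
    (hz : ‖z‖ ≤ 1 / 2) (hz' : ‖z'‖ ≤ 1 / 2) (hu : |u - u'| ≤ W) (hp : |p - p'| ≤ W) :
    |S * z.re - S' * z'.re| ≤ 90 * ((‖z‖ + ‖z'‖) * ‖w - w'‖ + (‖w‖ + ‖w'‖) * ‖z - z'‖
      + κ * ‖z - z'‖ + ((‖z‖ + ‖z'‖) * (‖w‖ + ‖w'‖) + κ * (‖z‖ + ‖z'‖)) * W) ∧
    |(S * z.im + κ * q) - (S' * z'.im + κ * q')| ≤ 90 * ((‖z‖ + ‖z'‖) * ‖w - w'‖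
      + (‖w‖ + ‖w'‖) * ‖z - z'‖ + κ * ‖z - z'‖
      + ((‖z‖ + ‖z'‖) * (‖w‖ + ‖w'‖) + κ * (‖z‖ + ‖z'‖)) * W) := by
  have a := norm_nonneg z
  have a' := norm_nonneg z'
  have b := norm_nonneg w
  have b' := norm_nonneg w'
  have h1 := Complex.abs_re_le_norm
  have h2 := Complex.abs_im_le_norm
  exact h.abs_rhs_sub_le h' hκ (by linarith) (by linarith [h1 z]) (by linarith [h2 z])
    (by linarith [h1 z']) (by linarith [h2 z']) (by linarith [h1 w]) (by linarith [h2 w])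
    (by linarith [h1 w']) (by linarith [h2 w']) (h1 (z - z')) (h2 (z - z')) (h1 (w - w'))
    (h2 (w - w')) hu hp

lemma g_G_sub_le (h : FrameRel κ z.re z.im w.re w.im g G u p q S)
    (h' : FrameRel κ z'.re z'.im w'.re w'.im g' G' u' p' q' S')
    (hz : ‖z‖ ≤ 1 / 2) (hz' : ‖z'‖ ≤ 1 / 2) :
    |g - g'| ≤ 4 * ‖z - z'‖ ∧ |G - G'| ≤ 4 * ‖w - w'‖ + 36 * ((‖w‖ + ‖w'‖) * ‖z - z'‖) := by
  have a := norm_nonneg z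
  have a' := norm_nonneg z'
  have b := norm_nonneg w
  have h1 := Complex.abs_re_le_norm
  have h2 := Complex.abs_im_le_norm
  have k1 := h.abs_g_sub_le h' (Z := ‖z‖ + ‖z'‖) (by linarith [h1 z]) (by linarith [h2 z])
    (by linarith [h1 z']) (by linarith [h2 z']) (h1 (z - z')) (h2 (z - z'))
  have k2 := h.abs_G_sub_le h' (Z := ‖z‖ + ‖z'‖) (Z₁ := ‖w‖ + ‖w'‖) (by linarith)
    (by linarith [h1 z]) (by linarith [h2 z])
    (by linarith [h1 z']) (by linarith [h2 z']) (by linarith [h1 w']) (by linarith [h2 w'])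
    (h1 (z - z')) (h2 (z - z')) (h1 (w - w')) (h2 (w - w'))
  have l1 := mul_le_of_le_one_left (norm_nonneg (z - z')) (by linarith : ‖z‖ + ‖z'‖ ≤ 1)
  have l2 := mul_le_of_le_one_left (norm_nonneg (w - w')) (by linarith : ‖z‖ + ‖z'‖ ≤ 1)
  constructor <;> linarith

lemma q_sub_le (h : FrameRel κ z.re z.im w.re w.im g G u p q S)
    (h' : FrameRel κ z'.re z'.im w'.re w'.im g' G' u' p' q' S')
    (hz : ‖z‖ ≤ 1 / 2) (hz' : ‖z'‖ ≤ 1 / 2) (hu : |u - u'| ≤ W) (hp : |p - p'| ≤ W) :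
    |q - q'| ≤ 12 * ‖z - z'‖ + 4 * W := by
  have a := norm_nonneg z
  have a' := norm_nonneg z'
  have h1 := Complex.abs_re_le_norm
  have h2 := Complex.abs_im_le_norm
  have k := h.abs_q_sub_le h' (Z := ‖z‖ + ‖z'‖) (by linarith) (by linarith [h1 z])
    (by linarith [h2 z]) (by linarith [h1 z']) (by linarith [h2 z']) (h1 (z - z')) (h2 (z - z'))
    hu hp
  have l := mul_le_of_le_one_left ((abs_nonneg _).trans hu) (by linarith : ‖z‖ + ‖z'‖ ≤ 1)
  linarith

end FrameRel
namespace FrameAlong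

variable {m : ℕ} {za dza zb dzb : ℝ → ℂ} {dva dvb ea eb : ℝ → V3} {r : ℝ}

lemma tendsto_crossComp_sub (Fa : FrameAlong m za dza dva ea) (Fb : FrameAlong m zb dzb dvb eb) :
    Tendsto (fun r => crossComp m r (ea r) - crossComp m r (eb r)) (nhdsWithin 0 (Ioi 0))
      (nhds 0) := by
  have h0 := ((Fa.tendsto_e 0).sub (Fb.tendsto_e 0)).abs
  have h2 := ((Fa.tendsto_e 2).sub (Fb.tendsto_e 2)).abs
  have h := h0.add h2
  rw [sub_self, sub_self, abs_zero, add_zero] at h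
  refine squeeze_zero_norm' ?_ h
  filter_upwards [self_mem_nhdsWithin] with r hr
  have hs := h1f_sq_add_h3f_sq (m := m) hr
  have e : crossComp m r (ea r) - crossComp m r (eb r)
      = -(h3f m r) * (ea r 0 - eb r 0) + h1f m r * (ea r 2 - eb r 2) := by
    simp only [crossComp]
    ring
  have a1 : |h1f m r| ≤ 1 := abs_le_one_iff_mul_self_le_one.2 (by nlinarith [sq_nonneg (h3f m r)])
  have a3 : |-(h3f m r)| ≤ 1 :=
    abs_le_one_iff_mul_self_le_one.2 (by nlinarith [sq_nonneg (h1f m r)])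
  rw [e, Real.norm_eq_abs]
  linarith [abs_add_le (-(h3f m r) * (ea r 0 - eb r 0)) (h1f m r * (ea r 2 - eb r 2)),
    abs_mul_le_mul a3 (le_refl |ea r 0 - eb r 0|), abs_mul_le_mul a1 (le_refl |ea r 2 - eb r 2|)]

/-- The contraction step: a bound `K` on the first two frame components of `e_a - e_b` improves
to `K / 2` up to a multiple of `‖z_a - z_b‖_X`. -/
lemma frame_sub_le_half_add (hm : 1 ≤ m)
    (Fa : FrameAlong m za dza dva ea) (Fb : FrameAlong m zb dzb dvb eb) {H ε N K : ℝ}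
    (hH : ∫ r in Ioi (0 : ℝ), profSpeed m r ^ 2 * r = H) (hε : 0 < ε) (hε2 : ε ≤ 1 / 2)
    (hεH : 180 * (3 + H) * ε ≤ 1) (ha : normX za dza ≤ ε) (hb : normX zb dzb ≤ ε) (hN : 0 < N)
    (hzN : normX (fun r => za r - zb r) (fun r => dza r - dzb r) ≤ N)
    (hK : ∀ s, 0 < s → |ea s 1 - eb s 1| ≤ K ∧
      |crossComp m s (ea s) - crossComp m s (eb s)| ≤ K) (hr : 0 < r) :
    |ea r 1 - eb r 1| ≤ K / 2 + 90 * (2 + H) * N ∧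
      |crossComp m r (ea r) - crossComp m r (eb r)| ≤ K / 2 + 90 * (2 + H) * N := by
  have hK0 : 0 ≤ K := (abs_nonneg _).trans (hK r hr).1
  have hH0 : 0 ≤ H := by
    rw [← hH]
    exact setIntegral_nonneg measurableSet_Ioi fun s hs => mul_nonneg (sq_nonneg _) (le_of_lt hs)
  have iδ := Fa.locAC.integrableOn_xDen_sub Fb.locAC Fa.integrable Fb.integrable
  have iab := Integrable.add Fa.integrable Fb.integrable
  have iκ := integrableOn_profSpeed_sq hm
  set G : ℝ → ℝ := fun r => 90 * (N * (xDen za dza r + xDen zb dzb r)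
    + xDen (fun r => za r - zb r) (fun r => dza r - dzb r) r / N
    + N / 2 * (profSpeed m r ^ 2 * r)
    + ((xDen za dza r + xDen zb dzb r) * (1 + 1 / ε) + ε / 2 * (profSpeed m r ^ 2 * r)) * K)
    with hGdef
  have i1 := iab.const_mul N
  have i2 := Integrable.div_const iδ N
  have i3 := Integrable.const_mul iκ (N / 2)
  have i4 := iab.mul_const (1 + 1 / ε)
  have i5 := Integrable.const_mul iκ (ε / 2)
  simp only [Pi.add_apply] at i1 i4
  have i12 := i1.fun_add i2
  have i123 := i12.fun_add i3
  have i45 := (i4.fun_add i5).mul_const K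
  have hG : IntegrableOn G (Ioi 0) :=
    (i123.add i45).const_mul 90
  have hGle : ∫ s in Ioi (0 : ℝ), G s ≤ K / 2 + 90 * (2 + H) * N := by
    have e : ∫ s in Ioi (0 : ℝ), G s = 90 * (N * (normX za dza ^ 2 + normX zb dzb ^ 2)
        + normX (fun r => za r - zb r) (fun r => dza r - dzb r) ^ 2 / N + N / 2 * H
        + ((normX za dza ^ 2 + normX zb dzb ^ 2) * (1 + 1 / ε) + ε / 2 * H) * K) := by
      rw [← hH, ← integral_xDen_eq, ← integral_xDen_eq, ← integral_xDen_eq, hGdef,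
        integral_const_mul, integral_add i123 i45, integral_add i12 i3,
        integral_add i1 i2, integral_mul_const, integral_add i4 i5,
        integral_const_mul, integral_div, integral_const_mul, integral_mul_const,
        integral_const_mul, integral_add Fa.integrable Fb.integrable]
    have qa : normX za dza ^ 2 ≤ ε ^ 2 := pow_le_pow_left₀ normX_nonneg ha 2
    have qb : normX zb dzb ^ 2 ≤ ε ^ 2 := pow_le_pow_left₀ normX_nonneg hb 2
    have qδ : normX (fun r => za r - zb r) (fun r => dza r - dzb r) ^ 2 / N ≤ N := by
      rw [div_le_iff₀ hN, ← sq]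
      exact pow_le_pow_left₀ normX_nonneg hzN 2
    have b1 : N * (normX za dza ^ 2 + normX zb dzb ^ 2) ≤ N * 1 := by
      gcongr
      nlinarith
    have b2 : (normX za dza ^ 2 + normX zb dzb ^ 2) * (1 + 1 / ε) ≤ 3 * ε := by
      have : (ε ^ 2 + ε ^ 2) * (1 + 1 / ε) = 2 * ε ^ 2 + 2 * ε := by
        field_simp
        ring
      calc _ ≤ (ε ^ 2 + ε ^ 2) * (1 + 1 / ε) := by gcongr
        _ ≤ 3 * ε := by nlinarith
    have b3 : ((normX za dza ^ 2 + normX zb dzb ^ 2) * (1 + 1 / ε) + ε / 2 * H) * K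
        ≤ (3 + H) * ε * K := by
      gcongr
      nlinarith [mul_nonneg hε.le hH0]
    have b4 := mul_le_mul_of_nonneg_right hεH hK0
    have b5 := mul_nonneg hN.le hH0
    rw [e]
    linarith
  have hbd : ∀ᵐ s : ℝ, 0 < s →
      |dot3 (dva s) (ea s) * (za s).re - dot3 (dvb s) (eb s) * (zb s).re| ≤ G s ∧
      |(dot3 (dva s) (ea s) * (za s).im + profSpeed m s * profComp m s (ea s))
        - (dot3 (dvb s) (eb s) * (zb s).im + profSpeed m s * profComp m s (eb s))| ≤ G s := by
    filter_upwards [Fa.ae_frameRel, Fb.ae_frameRel] with s h h' hs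
    obtain ⟨h1, h2⟩ := (h hs).rhs_sub_le (h' hs) (profSpeed_nonneg hs) (Fa.norm_z_le hs)
      (Fb.norm_z_le hs) (hK s hs).1 (hK s hs).2
    have h3 := mul_le_mul_of_nonneg_left (frame_terms_le (a := ‖za s‖) (b := ‖zb s‖)
      (a₁ := ‖dza s‖) (b₁ := ‖dzb s‖) (d := ‖za s - zb s‖) (d₁ := ‖dza s - dzb s‖)
      (κ := profSpeed m s) hs hN hε hK0) (by norm_num : (0 : ℝ) ≤ 90)
    exact ⟨h1.trans h3, h2.trans h3⟩
  constructor
  · refine (IsACDeriv.abs_le_of_tendsto_zero ((Fa.isACDeriv_e 1).sub (Fb.isACDeriv_e 1)) ?_ hG ?_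
      hr).trans hGle
    · simpa using (Fa.tendsto_e 1).sub (Fb.tendsto_e 1)
    · filter_upwards [hbd] with s h hs
      rw [← abs_neg, vOf_one, vOf_one]
      convert (h hs).1 using 2
      ring
  · refine (IsACDeriv.abs_le_of_tendsto_zero (Fa.isACDeriv_crossComp.sub Fb.isACDeriv_crossComp)
      (Fa.tendsto_crossComp_sub Fb) hG ?_ hr).trans hGle
    filter_upwards [hbd] with s h hs
    rw [← abs_neg]
    convert (h hs).2 using 2
    ring

lemma frame_sub_le (hm : 1 ≤ m)
    (Fa : FrameAlong m za dza dva ea) (Fb : FrameAlong m zb dzb dvb eb) {H ε N : ℝ}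
    (hH : ∫ r in Ioi (0 : ℝ), profSpeed m r ^ 2 * r = H) (hε : 0 < ε) (hε2 : ε ≤ 1 / 2)
    (hεH : 180 * (3 + H) * ε ≤ 1) (ha : normX za dza ≤ ε) (hb : normX zb dzb ≤ ε) (hN : 0 < N)
    (hzN : normX (fun r => za r - zb r) (fun r => dza r - dzb r) ≤ N) (hr : 0 < r) :
    |ea r 1 - eb r 1| ≤ 180 * (2 + H) * N ∧
      |crossComp m r (ea r) - crossComp m r (eb r)| ≤ 180 * (2 + H) * N := by
  have key := le_two_mul_of_forall_le_half_add (c := 90 * (2 + H) * N)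
    (f := fun s : Ioi (0 : ℝ) => max |ea s 1 - eb s 1|
      |crossComp m s (ea s) - crossComp m s (eb s)|)
    ⟨2, by
      rintro _ ⟨⟨s, hs⟩, rfl⟩
      have ra := Fa.frameRel hs
      have rb := Fb.frameRel hs
      exact max_le ((abs_sub _ _).trans (by linarith [ra.abs_u_le, rb.abs_u_le]))
        ((abs_sub _ _).trans (by linarith [ra.abs_p_le, rb.abs_p_le]))⟩
    (fun K hK s => max_le_iff.2 (frame_sub_le_half_add hm Fa Fb hH hε hε2 hεH ha hb hN hzN
      (fun t ht => max_le_iff.1 (hK ⟨t, ht⟩)) s.2)) ⟨r, hr⟩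
  have := max_le_iff.1 key
  constructor <;> linarith

lemma sqrt_nsq3_sub_le (hm : 1 ≤ m)
    (Fa : FrameAlong m za dza dva ea) (Fb : FrameAlong m zb dzb dvb eb) {H ε N : ℝ}
    (hH : ∫ r in Ioi (0 : ℝ), profSpeed m r ^ 2 * r = H) (hε : 0 < ε) (hε2 : ε ≤ 1 / 2)
    (hεH : 180 * (3 + H) * ε ≤ 1) (ha : normX za dza ≤ ε) (hb : normX zb dzb ≤ ε) (hN : 0 < N)
    (hzN : normX (fun r => za r - zb r) (fun r => dza r - dzb r) ≤ N) (hr : 0 < r) :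
    Real.sqrt (nsq3 (fun i => ea r i - eb r i)) ≤ (12 + 1080 * (2 + H)) * N := by
  obtain ⟨h1, h2⟩ := frame_sub_le hm Fa Fb hH hε hε2 hεH ha hb hN hzN hr
  have h3 := (Fa.frameRel hr).q_sub_le (Fb.frameRel hr) (Fa.norm_z_le hr) (Fb.norm_z_le hr) h1 h2
  have hd := ((Fa.locAC.sub Fb.locAC).norm_le_normX
    (Fa.locAC.integrableOn_xDen_sub Fb.locAC Fa.integrable Fb.integrable) hr).trans hzN
  have hsum : |ea r 1 - eb r 1| + |crossComp m r (ea r) - crossComp m r (eb r)|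
      + |profComp m r (ea r) - profComp m r (eb r)| ≤ (12 + 1080 * (2 + H)) * N := by
    linarith
  refine (Real.sqrt_le_left (by positivity)).2 ?_ |>.trans hsum
  rw [nsq3_eq_frame (m := m) hr, crossComp_sub, profComp_sub, ← sq_abs (ea r 1 - eb r 1),
    ← sq_abs (crossComp m r (ea r) - _), ← sq_abs (profComp m r (ea r) - _)]
  nlinarith [mul_nonneg (abs_nonneg (ea r 1 - eb r 1))
      (abs_nonneg (crossComp m r (ea r) - crossComp m r (eb r))),
    mul_nonneg (abs_nonneg (ea r 1 - eb r 1))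
      (abs_nonneg (profComp m r (ea r) - profComp m r (eb r))),
    mul_nonneg (abs_nonneg (crossComp m r (ea r) - crossComp m r (eb r)))
      (abs_nonneg (profComp m r (ea r) - profComp m r (eb r)))]

end FrameAlong
lemma add_add_sq_le (a b c : ℝ) : (a + b + c) ^ 2 ≤ 3 * a ^ 2 + 3 * b ^ 2 + 3 * c ^ 2 := by
  linarith [sq_nonneg (a - b), sq_nonneg (a - c), sq_nonneg (b - c)]

namespace FrameAlong

variable {m : ℕ} {za dza zb dzb : ℝ → ℂ} {dva dvb ea eb : ℝ → V3}

lemma aestronglyMeasurable_xDenV_sub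
    (Fa : FrameAlong m za dza dva ea) (Fb : FrameAlong m zb dzb dvb eb) :
    AEStronglyMeasurable (xDenV (fun r i => vOf m za r i - vOf m zb r i)
      (fun r i => dva r i - dvb r i)) (volume.restrict (Ioi 0)) := by
  have hd : ∀ i, AEMeasurable (fun r => dva r i - dvb r i) (volume.restrict (Ioi 0)) := fun i =>
    ((aestronglyMeasurable_Ioi_of_intervalIntegrable fun a b ha hab =>
      Fa.locAC_v.1 a b ha hab i).sub (aestronglyMeasurable_Ioi_of_intervalIntegrable
        fun a b ha hab => Fb.locAC_v.1 a b ha hab i)).aemeasurable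
  have hv : ∀ i, AEMeasurable (fun r => vOf m za r i - vOf m zb r i)
      (volume.restrict (Ioi 0)) := fun i =>
    (((Fa.locAC_v.isACDeriv i).sub (Fb.locAC_v.isACDeriv i)).continuousOn.aestronglyMeasurable
      measurableSet_Ioi).aemeasurable
  have hr : AEMeasurable (fun r : ℝ => r) (volume.restrict (Ioi 0)) := aemeasurable_id
  exact ((((((hd 0).pow_const 2).add ((hd 1).pow_const 2)).add ((hd 2).pow_const 2)).add
    (((((hv 0).pow_const 2).add ((hv 1).pow_const 2)).add ((hv 2).pow_const 2)).div
      (hr.pow_const 2))).mul hr).aestronglyMeasurable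

lemma ae_xDenV_sub_le (Fa : FrameAlong m za dza dva ea) (Fb : FrameAlong m zb dzb dvb eb) :
    ∀ᵐ r : ℝ, 0 < r →
      xDenV (fun r i => vOf m za r i - vOf m zb r i) (fun r i => dva r i - dvb r i) r
        ≤ (70 + 35 * (m : ℝ) ^ 2) * xDen (fun r => za r - zb r) (fun r => dza r - dzb r) r
          + 7776 * normX (fun r => za r - zb r) (fun r => dza r - dzb r) ^ 2
            * (xDen za dza r + xDen zb dzb r) := by
  filter_upwards [Fa.ae_frameRel, Fb.ae_frameRel, Fa.ae_deriv_v, Fb.ae_deriv_v]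
    with r ha hb va vb hr
  obtain ⟨hg, hG⟩ := (ha hr).g_G_sub_le (hb hr) (Fa.norm_z_le hr) (Fb.norm_z_le hr)
  obtain ⟨va1, va2, -⟩ := va hr
  obtain ⟨vb1, vb2, -⟩ := vb hr
  have hd := (Fa.locAC.sub Fb.locAC).norm_le_normX
    (Fa.locAC.integrableOn_xDen_sub Fb.locAC Fa.integrable Fb.integrable) hr
  have hκ := profSpeed_le (m := m) hr
  have hκ0 := profSpeed_nonneg (m := m) hr
  have hx : |(za r).re - (zb r).re| ≤ ‖za r - zb r‖ := Complex.abs_re_le_norm (za r - zb r)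
  have hy : |(za r).im - (zb r).im| ≤ ‖za r - zb r‖ := Complex.abs_im_le_norm (za r - zb r)
  have hX : |(dza r).re - (dzb r).re| ≤ ‖dza r - dzb r‖ :=
    Complex.abs_re_le_norm (dza r - dzb r)
  have hY : |(dza r).im - (dzb r).im| ≤ ‖dza r - dzb r‖ :=
    Complex.abs_im_le_norm (dza r - dzb r)
  set N := normX (fun r => za r - zb r) (fun r => dza r - dzb r)
  set κ := profSpeed m r
  set d := ‖za r - zb r‖ with hd_def
  set d₁ := ‖dza r - dzb r‖ with hd₁_def
  have hd0 : 0 ≤ d := norm_nonneg _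
  have hκa : |κ| ≤ κ := (abs_of_nonneg hκ0).le
  have hκd : (κ * d) ^ 2 ≤ (m : ℝ) ^ 2 * (d ^ 2 / r ^ 2) := by
    rw [mul_pow]
    calc κ ^ 2 * d ^ 2 ≤ (m / r) ^ 2 * d ^ 2 := by gcongr
      _ = _ := by ring
  have c1 : (dva r 1 - dvb r 1) ^ 2 ≤ d₁ ^ 2 := by
    rw [va1, vb1]
    exact sq_le_sq.2 (hX.trans (le_abs_self _))
  have c2 : crossComp m r (fun i => dva r i - dvb r i) ^ 2
      ≤ 2 * d₁ ^ 2 + 32 * (κ * d) ^ 2 := by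
    have e : crossComp m r (fun i => dva r i - dvb r i) = ((dza r).im - (dzb r).im)
        + κ * ((1 + gamC za r) - (1 + gamC zb r)) := by
      rw [crossComp_sub, va2, vb2]
      ring
    have h1 : |crossComp m r (fun i => dva r i - dvb r i)| ≤ d₁ + 4 * (κ * d) := by
      rw [e]
      linarith [abs_add_le ((dza r).im - (dzb r).im)
        (κ * ((1 + gamC za r) - (1 + gamC zb r))), abs_mul_le_mul hκa hg]
    have h2 := sq_le_sq.2 (h1.trans (le_abs_self _))
    linarith [sq_nonneg (d₁ - 4 * (κ * d))]
  have c3 : profComp m r (fun i => dva r i - dvb r i) ^ 2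
      ≤ 48 * d₁ ^ 2 + 7776 * (N ^ 2 * (‖dza r‖ ^ 2 + ‖dzb r‖ ^ 2)) + 3 * (κ * d) ^ 2 := by
    have e : profComp m r (fun i => dva r i - dvb r i)
        = ((profComp m r (dva r) + κ * (za r).im) - (profComp m r (dvb r) + κ * (zb r).im))
          - κ * ((za r).im - (zb r).im) := by
      rw [profComp_sub]
      ring
    have h1 : |profComp m r (fun i => dva r i - dvb r i)|
        ≤ 4 * d₁ + 36 * ((‖dza r‖ + ‖dzb r‖) * d) + κ * d := by
      rw [e]
      linarith [abs_sub ((profComp m r (dva r) + κ * (za r).im)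
        - (profComp m r (dvb r) + κ * (zb r).im)) (κ * ((za r).im - (zb r).im)),
        abs_mul_le_mul hκa hy]
    have h2 := sq_le_sq.2 (h1.trans (le_abs_self _))
    have h3 : ((‖dza r‖ + ‖dzb r‖) * d) ^ 2 ≤ 2 * (N ^ 2 * (‖dza r‖ ^ 2 + ‖dzb r‖ ^ 2)) := by
      calc ((‖dza r‖ + ‖dzb r‖) * d) ^ 2 = (‖dza r‖ + ‖dzb r‖) ^ 2 * d ^ 2 := by ring
        _ ≤ (2 * (‖dza r‖ ^ 2 + ‖dzb r‖ ^ 2)) * N ^ 2 := by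
            gcongr
            nlinarith [sq_nonneg (‖dza r‖ - ‖dzb r‖)]
        _ = _ := by ring
    have h4 := add_add_sq_le (4 * d₁) (36 * ((‖dza r‖ + ‖dzb r‖) * d)) (κ * d)
    linarith
  have hdv : nsq3 (fun i => dva r i - dvb r i)
      ≤ 51 * d₁ ^ 2 + 35 * (m : ℝ) ^ 2 * (d ^ 2 / r ^ 2)
        + 7776 * (N ^ 2 * (‖dza r‖ ^ 2 + ‖dzb r‖ ^ 2)) := by
    rw [nsq3_eq_frame (m := m) hr]
    linarith
  have hv : nsq3 (fun i => vOf m za r i - vOf m zb r i) ≤ 18 * d ^ 2 := by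
    rw [nsq3_eq_frame (m := m) hr, crossComp_sub, profComp_sub, crossComp_vOf hr, crossComp_vOf hr,
      profComp_vOf hr, profComp_vOf hr, vOf_one, vOf_one]
    have k1 := sq_le_sq.2 (hx.trans (le_abs_self _))
    have k2 := sq_le_sq.2 (hy.trans (le_abs_self _))
    have k3 := sq_le_sq.2 (hg.trans (le_abs_self _))
    linarith
  have hv' : nsq3 (fun i => vOf m za r i - vOf m zb r i) / r ^ 2 ≤ 18 * (d ^ 2 / r ^ 2) := by
    rw [← mul_div_assoc]
    gcongr
  have p1 : 0 ≤ (m : ℝ) ^ 2 * d₁ ^ 2 := by positivity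
  have p2 : 0 ≤ d ^ 2 / r ^ 2 := by positivity
  have p3 : 0 ≤ N ^ 2 * (‖za r‖ ^ 2 / r ^ 2) := by positivity
  have p4 : 0 ≤ N ^ 2 * (‖zb r‖ ^ 2 / r ^ 2) := by positivity
  have p5 := sq_nonneg d₁
  have hsum : nsq3 (fun i => dva r i - dvb r i)
      + nsq3 (fun i => vOf m za r i - vOf m zb r i) / r ^ 2
      ≤ (70 + 35 * (m : ℝ) ^ 2) * (d₁ ^ 2 + d ^ 2 / r ^ 2) + 7776 * N ^ 2
        * ((‖dza r‖ ^ 2 + ‖za r‖ ^ 2 / r ^ 2) + (‖dzb r‖ ^ 2 + ‖zb r‖ ^ 2 / r ^ 2)) := by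
    linarith
  have := mul_le_mul_of_nonneg_right hsum hr.le
  simp only [xDenV, xDen, ← hd_def, ← hd₁_def]
  linarith

lemma xDenV_nonneg {v dv : ℝ → V3} {r : ℝ} (hr : 0 < r) : 0 ≤ xDenV v dv r := by
  simp only [xDenV, nsq3]
  positivity

lemma xDenV_sub (Fa : FrameAlong m za dza dva ea) (Fb : FrameAlong m zb dzb dvb eb) :
    IntegrableOn (xDenV (fun r i => vOf m za r i - vOf m zb r i) (fun r i => dva r i - dvb r i))
      (Ioi 0) ∧
    Real.sqrt (∫ r in Ioi (0 : ℝ), xDenV (fun r i => vOf m za r i - vOf m zb r i)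
        (fun r i => dva r i - dvb r i) r)
      ≤ (3958 + 35 * (m : ℝ) ^ 2) * normX (fun r => za r - zb r) (fun r => dza r - dzb r) := by
  have iδ := Fa.locAC.integrableOn_xDen_sub Fb.locAC Fa.integrable Fb.integrable
  have hbd := ae_restrict_of_ae (s := Ioi (0 : ℝ)) (Fa.ae_xDenV_sub_le Fb)
  have i1 := iδ.const_mul (70 + 35 * (m : ℝ) ^ 2)
  have i2 := (Integrable.fun_add Fa.integrable Fb.integrable).const_mul
    (7776 * normX (fun r => za r - zb r) (fun r => dza r - dzb r) ^ 2)
  have hi : IntegrableOn (xDenV (fun r i => vOf m za r i - vOf m zb r i)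
      (fun r i => dva r i - dvb r i)) (Ioi 0) := by
    refine Integrable.mono' (i1.fun_add i2) (Fa.aestronglyMeasurable_xDenV_sub Fb) ?_
    filter_upwards [hbd, ae_restrict_mem measurableSet_Ioi] with r h hr
    rw [Real.norm_of_nonneg (xDenV_nonneg hr)]
    exact h hr
  refine ⟨hi, Real.sqrt_le_iff.2 ⟨mul_nonneg (by positivity) normX_nonneg, ?_⟩⟩
  have h1 : ∫ r in Ioi (0 : ℝ), xDenV (fun r i => vOf m za r i - vOf m zb r i)
      (fun r i => dva r i - dvb r i) r ≤ _ := integral_mono_ae hi (i1.fun_add i2) (by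
    filter_upwards [hbd, ae_restrict_mem measurableSet_Ioi] with r h hr
    exact h hr)
  rw [integral_add i1 i2, integral_const_mul, integral_const_mul,
    integral_add Fa.integrable Fb.integrable, integral_xDen_eq, integral_xDen_eq,
    integral_xDen_eq] at h1
  set N := normX (fun r => za r - zb r) (fun r => dza r - dzb r)
  have qa : normX za dza ^ 2 ≤ (1 / 2) ^ 2 := pow_le_pow_left₀ normX_nonneg Fa.norm_le 2
  have qb : normX zb dzb ^ 2 ≤ (1 / 2) ^ 2 := pow_le_pow_left₀ normX_nonneg Fb.norm_le 2
  have h2 : 7776 * N ^ 2 * (normX za dza ^ 2 + normX zb dzb ^ 2) ≤ 7776 * N ^ 2 * (1 / 2) := by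
    gcongr
    linarith
  have h3 : (3958 + 35 * (m : ℝ) ^ 2) * N ^ 2 ≤ ((3958 + 35 * (m : ℝ) ^ 2) * N) ^ 2 := by
    rw [mul_pow]
    gcongr
    exact le_self_pow₀ (by nlinarith [sq_nonneg (m : ℝ)]) two_ne_zero
  linarith

end FrameAlong

/-- **Difference estimates for the maps and the gauge frames (Lemma on δe).**
For m ≥ 1 there are ε, C > 0 such that: if ‖z_l‖_X ≤ ε (l = a,b), v_l is the map
determined by z_l, and e_l solves e_l′ = −(v_l′·e_l) v_l, e_l(0) = ĵ, then
‖v_a − v_b‖_X + ‖e_a − e_b‖_{L^∞} ≤ C ‖z_a − z_b‖_X. -/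
theorem statement17 (m : ℕ) (hm : 1 ≤ m) :
    ∃ ε > (0:ℝ), ∃ C > (0:ℝ),
      ∀ (za dza zb dzb : ℝ → ℂ),
      LocACC za dza → LocACC zb dzb →
      IntegrableOn (xDen za dza) (Ioi (0:ℝ)) → normX za dza ≤ ε →
      IntegrableOn (xDen zb dzb) (Ioi (0:ℝ)) → normX zb dzb ≤ ε →
      ∀ (dva dvb : ℝ → V3),
      LocAC (vOf m za) dva → LocAC (vOf m zb) dvb →
      ∀ (ea eb : ℝ → V3),
      -- e_a solves the transport ODE with e_a(0) = ĵ
      (∀ i, ea 0 i = jHat i) →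
      (∀ r : ℝ, 0 ≤ r → ∀ i,
        IntegrableOn (fun τ => dot3 (dva τ) (ea τ) * vOf m za τ i) (Icc 0 r)) →
      (∀ r : ℝ, 0 ≤ r → ∀ i,
        ea r i = jHat i - ∫ τ in (0:ℝ)..r, dot3 (dva τ) (ea τ) * vOf m za τ i) →
      -- e_b solves the transport ODE with e_b(0) = ĵ
      (∀ i, eb 0 i = jHat i) →
      (∀ r : ℝ, 0 ≤ r → ∀ i,
        IntegrableOn (fun τ => dot3 (dvb τ) (eb τ) * vOf m zb τ i) (Icc 0 r)) →
      (∀ r : ℝ, 0 ≤ r → ∀ i,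
        eb r i = jHat i - ∫ τ in (0:ℝ)..r, dot3 (dvb τ) (eb τ) * vOf m zb τ i) →
      -- conclusion: ‖δv‖_X + ‖δe‖_{L^∞} ≲ ‖δz‖_X
      IntegrableOn
        (xDenV (fun r i => vOf m za r i - vOf m zb r i) (fun r i => dva r i - dvb r i))
        (Ioi (0:ℝ)) ∧
      ∀ r : ℝ, 0 ≤ r →
        Real.sqrt (∫ ρ in Ioi (0:ℝ),
            xDenV (fun ρ i => vOf m za ρ i - vOf m zb ρ i)
              (fun ρ i => dva ρ i - dvb ρ i) ρ)
          + Real.sqrt (nsq3 (fun i => ea r i - eb r i))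
        ≤ C * normX (fun ρ => za ρ - zb ρ) (fun ρ => dza ρ - dzb ρ) := by
  set H : ℝ := ∫ r in Ioi (0 : ℝ), profSpeed m r ^ 2 * r with hH
  have hH0 : 0 ≤ H :=
    setIntegral_nonneg measurableSet_Ioi fun s hs => mul_nonneg (sq_nonneg _) (le_of_lt hs)
  have hε : (0 : ℝ) < 1 / (180 * (3 + H)) := by positivity
  have hε2 : 1 / (180 * (3 + H)) ≤ 1 / 2 := by
    gcongr
    linarith
  have hεH : 180 * (3 + H) * (1 / (180 * (3 + H))) ≤ 1 := (mul_one_div_cancel (by positivity)).le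
  refine ⟨1 / (180 * (3 + H)), hε, (3958 + 35 * (m : ℝ) ^ 2) + (12 + 1080 * (2 + H)),
    by positivity, ?_⟩
  intro za dza zb dzb hza hzb iza na izb nb dva dvb hva hvb ea eb ea0 iea hea eb0 ieb heb
  have Fa : FrameAlong m za dza dva ea := ⟨hza, iza, na.trans hε2, hva, iea, hea⟩
  have Fb : FrameAlong m zb dzb dvb eb := ⟨hzb, izb, nb.trans hε2, hvb, ieb, heb⟩
  obtain ⟨hi, hv⟩ := Fa.xDenV_sub Fb
  refine ⟨hi, fun r hr => ?_⟩
  rw [add_mul]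
  refine add_le_add hv ?_
  rcases hr.eq_or_lt with rfl | hr
  · have : nsq3 (fun i => ea 0 i - eb 0 i) = 0 := by simp [nsq3, ea0, eb0]
    rw [this, Real.sqrt_zero]
    exact mul_nonneg (by positivity) normX_nonneg
  · have hc : 0 < 12 + 1080 * (2 + H) := by positivity
    rw [← div_le_iff₀' hc]
    refine le_of_forall_gt_imp_ge_of_dense fun N hN => ?_
    rw [div_le_iff₀' hc]
    exact Fa.sqrt_nsq3_sub_le hm Fb hH.symm hε hε2 hεH na nb (normX_nonneg.trans_lt hN) hN.le hr

end
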